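/- arXiv:2009.01025 — 15 statements merged into one kernel-verified Lean document; each statement's English description precedes it below -/
import Mathlib

section
/- Let q be a prime power, K a finite field with q elements, and G = PGL(2,K) the projective general linear group of degree 2 over K. Let D be a subgroup of G isomorphic (as an abstract group) to the dihedral group of order 2(q+1), and let A = {g ∈ G : g^{q+1} = 1 and g^2 ≠ 1}. Then for every g ∈ G, the number of pairs (x, d) ∈ A × D with x·d = g equals q if q is even, and equals q − 1 if q is odd. -/
/-- The projective general linear group of degree 2 over `K`:
the quotient of `GL(2, K)` by its center. -/
abbrev PGL2 (K : Type*) [Field K] :=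
  GL (Fin 2) K ⧸ Subgroup.center (GL (Fin 2) K)



structure Geo (G X : Type*) [Group G] [MulAction G X] (n : ℕ) : Prop where
  fix3 : ∀ (h : G) (a b c : X), a ≠ b → a ≠ c → b ≠ c →
    h • a = a → h • b = b → h • c = c → h = 1
  swap : ∀ (h : G) (a b : X), a ≠ b → h • a = b → h • b = a → h ^ 2 = 1
  pow_of_free : ∀ h : G, (∀ a : X, h • a ≠ a) → h ^ n = 1
  sq_of_fix : ∀ (h : G) (a : X), h • a = a → h ^ n = 1 → h ^ 2 = 1
  exInv : ∀ c g : G, (∀ a : X, c • a ≠ a) → ∃ y, Commute y c ∧ (g * y) ^ 2 = 1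
  uniqInv : ∀ (c t : G) (k : ℕ), c ^ k ≠ 1 → t ≠ 1 → t ^ 2 = 1 → t * c ^ k ≠ 1 →
    (t * c ^ k) ^ 2 = 1 → (t * c) ^ 2 = 1
  two : ∀ (h t : G) (a b : X), a ≠ b → h ≠ 1 → t ≠ 1 → h • a = a → h • b = b →
    t • a = a → t • b = b → t ^ 2 = 1 → t * h * t⁻¹ = h⁻¹ → h = t

structure Dih {G : Type*} [Group G] {n : ℕ} (ρ σ : ZMod n → G) : Prop where
  rr : ∀ i j, ρ i * ρ j = ρ (i + j)
  rs : ∀ i j, ρ i * σ j = σ (j - i)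
  sr : ∀ i j, σ i * ρ j = σ (i + j)
  ss : ∀ i j, σ i * σ j = ρ (j - i)
  r0 : ρ 0 = 1
  inj : Function.Injective ρ
  sinj : Function.Injective σ
  ne : ∀ i j, ρ i ≠ σ j

section
variable {G X : Type*} [Group G] [MulAction G X] {n : ℕ} {ρ σ : ZMod n → G}

lemma Dih.pow (d : Dih ρ σ) (k : ℕ) : ρ 1 ^ k = ρ k := by
  induction k with
  | zero => simp [d.r0]
  | succ k ih => rw [pow_succ, ih, d.rr]; push_cast; rfl

lemma Dih.r_pow_n (d : Dih ρ σ) (i : ZMod n) : ρ i ^ n = 1 := by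
  have : ∀ k : ℕ, ρ i ^ k = ρ (k * i) := by
    intro k
    induction k with
    | zero => simp [d.r0]
    | succ k ih => rw [pow_succ, ih, d.rr]; push_cast; congr 1; ring
  rw [this]; simp [d.r0]

lemma Dih.inv (d : Dih ρ σ) (i : ZMod n) : (ρ i)⁻¹ = ρ (-i) := by
  rw [inv_eq_iff_mul_eq_one, d.rr]; simp [d.r0]

lemma Dih.sinv (d : Dih ρ σ) (i : ZMod n) : (σ i)⁻¹ = σ i := by
  rw [inv_eq_iff_mul_eq_one, d.ss]; simp [d.r0]

lemma Dih.nofix (d : Dih ρ σ) (gm : Geo G X n) (hn : 3 ≤ n) (a : X) : ρ 1 • a ≠ a := by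
  intro h
  have h2 := gm.sq_of_fix _ a h (d.r_pow_n 1)
  rw [d.pow, ← d.r0] at h2
  have h3 := d.inj h2
  rw [ZMod.natCast_eq_zero_iff] at h3
  exact absurd (Nat.le_of_dvd (by norm_num) h3) (by omega)

lemma Dih.free (d : Dih ρ σ) (gm : Geo G X n) (hn : 3 ≤ n) (i : ZMod n) (a : X)
    (h : ρ i • a = a) : i = 0 := by
  have key : ∀ b : X, ρ i • b = b → ρ i • (ρ 1 • b) = ρ 1 • b := by
    intro b hb
    rw [← mul_smul, d.rr, add_comm, ← d.rr, mul_smul, hb]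
  have h1 := key _ h
  have h2 := key _ h1
  have n0 := d.nofix gm hn
  have ne3 : ρ 1 • ρ 1 • a ≠ a := by
    intro h3
    have := gm.swap (ρ 1) a (ρ 1 • a) (n0 a).symm rfl h3
    rw [d.pow, ← d.r0] at this
    have h3 := d.inj this
    rw [ZMod.natCast_eq_zero_iff] at h3
    exact absurd (Nat.le_of_dvd (by norm_num) h3) (by omega)
  have := gm.fix3 _ _ _ _ (n0 a).symm ne3.symm (n0 _).symm h h1 h2
  exact d.inj (this.trans d.r0.symm)

lemma Dih.bij (d : Dih ρ σ) (gm : Geo G X n) (hn : 3 ≤ n) [Finite X] (hX : Nat.card X = n)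
    (a : X) : Function.Bijective (fun i => ρ i • a) := by
  have : NeZero n := ⟨by omega⟩
  have := Fintype.ofFinite X
  rw [Fintype.bijective_iff_injective_and_card]
  refine ⟨fun i j h => ?_, by rw [ZMod.card, ← hX, Nat.card_eq_fintype_card]⟩
  have : ρ (-j + i) • a = a := by
    rw [← d.rr, mul_smul]; simp only at h; rw [h, ← mul_smul, d.rr]; simp [d.r0]
  have := d.free gm hn _ _ this
  linear_combination this

lemma Dih.faithful (gm : Geo G X n) (hn : 3 ≤ n) [Finite X] (hX : Nat.card X = n)
    (w : G) (h : ∀ a : X, w • a = a) : w = 1 := by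
  have := Fintype.ofFinite X
  have : 2 < Fintype.card X := by rw [← Nat.card_eq_fintype_card]; omega
  obtain ⟨a, b, c, h1, h2, h3⟩ := Fintype.two_lt_card_iff.mp this
  exact gm.fix3 w a b c h1 h2 h3 (h _) (h _) (h _)

lemma Dih.centr (d : Dih ρ σ) (gm : Geo G X n) (hn : 3 ≤ n) [Finite X] (hX : Nat.card X = n)
    (y : G) (hy : Commute y (ρ 1)) : ∃ i, y = ρ i := by
  have : NeZero n := ⟨by omega⟩
  have hXn : Nonempty X := by
    by_contra h
    rw [not_nonempty_iff] at h
    rw [Nat.card_of_isEmpty] at hX; omega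
  obtain ⟨a⟩ := hXn
  obtain ⟨k, hk⟩ := (d.bij gm hn hX a).2 (y • a)
  refine ⟨k, ?_⟩
  have hy' : ∀ i, Commute y (ρ i) := by
    intro i
    have := hy.pow_right i.val
    rwa [d.pow, ZMod.natCast_zmod_val] at this
  have : (ρ k)⁻¹ * y = 1 := by
    apply Dih.faithful gm hn hX
    intro b
    obtain ⟨j, hj⟩ := (d.bij gm hn hX a).2 b
    simp only at hj hk
    rw [← hj, mul_smul, ← mul_smul y, (hy' j).eq, mul_smul, ← hk, ← mul_smul (ρ j), d.rr,
      add_comm, ← d.rr, mul_smul, inv_smul_smul]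
  exact (inv_mul_eq_one.mp this).symm

lemma Dih.existsInv (d : Dih ρ σ) (gm : Geo G X n) (hn : 3 ≤ n) [Finite X] (hX : Nat.card X = n)
    (γ : G) : ∃ j, (γ * ρ j) ^ 2 = 1 := by
  obtain ⟨y, hy, h⟩ := gm.exInv (ρ 1) γ (d.nofix gm hn)
  obtain ⟨i, rfl⟩ := d.centr gm hn hX y hy
  exact ⟨i, h⟩

lemma Dih.unique (d : Dih ρ σ) (gm : Geo G X n) (hn : 3 ≤ n) [Finite X] (hX : Nat.card X = n)
    (γ : G) (h1 : ∀ i, γ ≠ ρ i) (h2 : ∀ i, γ ≠ σ i) (i j : ZMod n)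
    (hi : (γ * ρ i) ^ 2 = 1) (hj : (γ * ρ j) ^ 2 = 1) : i = j := by
  have : NeZero n := ⟨by omega⟩
  by_contra hij
  have nt : ∀ k, γ * ρ k ≠ 1 := by
    intro k hk
    rw [mul_eq_one_iff_eq_inv, d.inv] at hk
    exact h1 _ hk
  have e1 : γ * ρ i * ρ 1 ^ (j - i).val = γ * ρ j := by
    rw [d.pow, mul_assoc, d.rr]; simp
  have e := gm.uniqInv (ρ 1) (γ * ρ i) (j - i).val ?_ (nt i) hi (by rw [e1]; exact nt j)
    (by rw [e1, hj])
  · set t := γ * ρ i with ht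
    have ht1 : t⁻¹ = t := by rw [inv_eq_iff_mul_eq_one, ← sq, hi]
    have e2 : t * ρ 1 * t = ρ (-1) := by
      rw [← d.inv, ← mul_eq_one_iff_eq_inv, ← e, sq]; group
    have hc : Commute (t * σ 0) (ρ 1) := by
      show t * σ 0 * ρ 1 = ρ 1 * (t * σ 0)
      have e3 : ρ 1 * t = t * ρ (-1) := by
        rw [← e2]
        calc ρ 1 * t = t * t⁻¹ * ρ 1 * t := by group
          _ = _ := by rw [ht1]; group
      rw [mul_assoc t, d.sr, ← mul_assoc, e3, mul_assoc t, d.rs]; simp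
    obtain ⟨k, hk⟩ := d.centr gm hn hX _ hc
    have : γ = σ (-k - i) := by
      rw [ht, mul_assoc, d.rs, ← eq_mul_inv_iff_mul_eq, d.sinv, d.rs] at hk
      rw [hk]; congr 1; ring
    exact h2 _ this
  · intro h
    rw [d.pow, ← d.r0] at h
    have := d.inj h
    rw [ZMod.natCast_zmod_val] at this
    exact hij (by linear_combination -this)

open Classical in
lemma Dih.main (d : Dih ρ σ) (gm : Geo G X n) (hn : 3 ≤ n) [Fintype X] [NeZero n]
    (hX : Nat.card X = n)
    (γ : G) (h1 : ∀ i, γ ≠ ρ i) (h2 : ∀ i, γ ≠ σ i) (j : ZMod n) (hj : (γ * σ j) ^ 2 = 1) :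
    2 * (Finset.univ.filter (fun i : ZMod n => ∀ a : X, (γ * ρ i) • a ≠ a)).card
      + (Finset.univ.filter (fun a : X => (γ * σ j) • a = a)).card = n := by
  set t := γ * σ j with ht
  have ht1 : t ≠ 1 := by
    intro hk
    rw [ht, mul_eq_one_iff_eq_inv, d.sinv] at hk
    exact h2 _ hk
  have dc : ∀ s : Finset X, ∑ i : ZMod n, (s.filter (fun a => (γ * ρ i) • a = a)).card = s.card := by
    intro s
    simp_rw [Finset.card_filter]
    rw [Finset.sum_comm, Finset.card_eq_sum_ones]
    refine Finset.sum_congr rfl fun a _ => ?_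
    rw [← Finset.card_filter, Finset.card_eq_one]
    obtain ⟨k, hk⟩ := (d.bij gm hn hX a).2 (γ⁻¹ • a)
    refine ⟨k, ?_⟩
    ext i
    simp only [Finset.mem_filter, Finset.mem_univ, true_and, Finset.mem_singleton]
    simp only at hk
    rw [mul_smul, smul_eq_iff_eq_inv_smul, ← hk]
    exact (d.bij gm hn hX a).1.eq_iff
  have pt : ∀ i : ZMod n, 2 * (if ∀ a : X, (γ * ρ i) • a ≠ a then 1 else 0)
      + (Finset.univ.filter (fun a : X => (γ * ρ i) • a = a)).card
      + ((Finset.univ.filter (fun a : X => t • a = a)).filter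
          (fun a => (γ * ρ i) • a = a)).card = 2 := by
    intro i
    set h := γ * ρ i with hh
    have hne1 : h ≠ 1 := by
      intro hk
      rw [hh, mul_eq_one_iff_eq_inv, d.inv] at hk
      exact h1 _ hk
    have hht : h ≠ t := by
      intro hk
      exact d.ne _ _ (mul_left_cancel hk)
    have htinv : t⁻¹ = t := by rw [inv_eq_iff_mul_eq_one, ← sq, hj]
    have hr : t = h * σ (i + j) := by
      rw [ht, hh, mul_assoc, d.rs]; congr 2; ring
    have hinv : t * h * t⁻¹ = h⁻¹ := by
      have e1 : (h * σ (i + j)) * (h * σ (i + j)) = 1 := by rw [← hr, ← sq, hj]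
      have e2 : h * σ (i + j) * h = (σ (i + j))⁻¹ := by
        rw [← mul_eq_one_iff_eq_inv, ← e1]; group
      calc t * h * t⁻¹ = (h * σ (i + j) * h) * t⁻¹ := by rw [hr]
        _ = (t * σ (i + j))⁻¹ := by rw [e2]; group
        _ = h⁻¹ := by rw [hr, mul_assoc, d.ss]; simp [d.r0]
    have htp : ∀ a : X, h • a = a → h • (t • a) = t • a := by
      intro a ha
      have : h⁻¹ • (t • a) = t • a := by
        rw [← hinv, ← mul_smul]; simp [mul_smul, ha]
      rw [inv_smul_eq_iff] at this; exact this.symm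
    by_cases hf : ∀ a : X, h • a ≠ a
    · have e1 : (Finset.univ.filter (fun a : X => h • a = a)) = ∅ := by
        ext a; simp [hf a]
      have e2 : ((Finset.univ.filter (fun a : X => t • a = a)).filter (fun a => h • a = a)) = ∅ := by
        ext a; simp [hf a]
      rw [e1, e2]; simp [hf]
    · rw [if_neg hf]
      push Not at hf
      obtain ⟨a, ha⟩ := hf
      by_cases hb : ∃ b, b ≠ a ∧ h • b = b
      · obtain ⟨b, hba, hb⟩ := hb
        have e1 : (Finset.univ.filter (fun a : X => h • a = a)) = {a, b} := by
          ext x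
          simp only [Finset.mem_filter, Finset.mem_univ, true_and, Finset.mem_insert,
            Finset.mem_singleton]
          constructor
          · intro hx
            by_contra hc
            push Not at hc
            exact hne1 (gm.fix3 h a b x hba.symm (Ne.symm hc.1) (Ne.symm hc.2) ha hb hx)
          · rintro (rfl | rfl) <;> assumption
        have mem : ∀ x : X, h • x = x → x = a ∨ x = b := by
          intro x hx
          have : x ∈ (Finset.univ.filter (fun a : X => h • a = a)) := by simp [hx]
          rw [e1] at this; simpa using this
        have no : ∀ x y : X, x ≠ y → h • x = x → h • y = y → (∀ z, h • z = z → z = x ∨ z = y) →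
            t • x ≠ x := by
          intro x y hxy hx hy hm htx
          rcases hm _ (htp y hy) with e | e
          · exact hxy (smul_left_cancel t (htx.trans e.symm))
          · exact hht (gm.two h t x y hxy hne1 ht1 hx hy htx e hj hinv)
        have e2 : ((Finset.univ.filter (fun a : X => t • a = a)).filter
            (fun a => h • a = a)) = ∅ := by
          ext x
          simp only [Finset.mem_filter, Finset.mem_univ, true_and, Finset.notMem_empty, iff_false,
            not_and]
          intro hx hhx
          rcases mem x hhx with rfl | rfl
          · exact no _ b hba.symm ha hb mem hx
          · exact no _ a hba hb ha (fun z hz => (mem z hz).symm) hx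
        rw [e1, e2, Finset.card_pair hba.symm]; simp
      · push Not at hb
        have mem : ∀ x : X, h • x = x → x = a := fun x hx => by
          by_contra hc; exact hb x hc hx
        have e1 : (Finset.univ.filter (fun a : X => h • a = a)) = {a} := by
          ext x
          simp only [Finset.mem_filter, Finset.mem_univ, true_and, Finset.mem_singleton]
          exact ⟨mem x, by rintro rfl; exact ha⟩
        have e2 : ((Finset.univ.filter (fun a : X => t • a = a)).filter
            (fun a => h • a = a)) = {a} := by
          ext x
          simp only [Finset.mem_filter, Finset.mem_univ, true_and, Finset.mem_singleton]
          exact ⟨fun hx => mem x hx.2, by rintro rfl; exact ⟨mem _ (htp _ ha), ha⟩⟩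
        rw [e1, e2]; simp
  have hs := Finset.sum_congr (rfl : (Finset.univ : Finset (ZMod n)) = _) (fun i _ => pt i)
  rw [Finset.sum_add_distrib, Finset.sum_add_distrib, ← Finset.mul_sum, ← Finset.card_filter,
    dc, dc] at hs
  simp only [Finset.card_univ, Finset.sum_const, ZMod.card, smul_eq_mul] at hs
  rw [← Nat.card_eq_fintype_card, hX] at hs
  omega

open Classical in
lemma Geo.fixcard (gm : Geo G X n) [Fintype X] (hX : Nat.card X = n)
    (t : G) (ht : t ≠ 1) (ht2 : t ^ 2 = 1) :
    (Finset.univ.filter (fun a : X => t • a = a)).card ≤ 2 ∧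
    (Finset.univ.filter (fun a : X => t • a = a)).card % 2 = n % 2 := by
  constructor
  · by_contra hc
    push Not at hc
    obtain ⟨a, b, c, ha, hb, hc, h1, h2, h3⟩ := Finset.two_lt_card_iff.mp hc
    simp at ha hb hc
    exact ht (gm.fix3 t a b c h1 h2 h3 ha hb hc)
  · have := Equiv.Perm.card_fixedPoints_modEq (f := (fun a : X => t • a : Function.End X)) (p := 2)
      (n := 1) (by
        funext a
        show t • t • a = a
        rw [← mul_smul, ← sq, ht2, one_smul])
    rw [← Nat.card_eq_fintype_card, hX] at this
    rw [← Fintype.card_subtype]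
    refine Eq.trans ?_ this.symm
    congr 1

open Classical in
lemma Dih.count (d : Dih ρ σ) (gm : Geo G X n) (hn : 3 ≤ n) [Fintype X] [NeZero n]
    (hX : Nat.card X = n)
    (γ : G) (h1 : ∀ i, γ ≠ ρ i) (h2 : ∀ i, γ ≠ σ i) (k : ZMod n) (hk : (γ * ρ k) ^ 2 = 1) :
    (Finset.univ.filter (fun i : ZMod n => (γ * ρ i) ^ n = 1 ∧ (γ * ρ i) ^ 2 ≠ 1)).card
      + (if (Finset.univ.filter (fun a : X => (γ * ρ k) • a = a)).card = 0 then 1 else 0)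
      = (Finset.univ.filter (fun i : ZMod n => ∀ a : X, (γ * ρ i) • a ≠ a)).card := by
  have hA : ∀ h : G, (h ^ n = 1 ∧ h ^ 2 ≠ 1) ↔ ((∀ a : X, h • a ≠ a) ∧ h ^ 2 ≠ 1) := by
    intro h
    constructor
    · rintro ⟨h1, h2⟩
      exact ⟨fun a ha => h2 (gm.sq_of_fix h a ha h1), h2⟩
    · rintro ⟨h1, h2⟩
      exact ⟨gm.pow_of_free h h1, h2⟩
  simp_rw [hA]
  have hu : ∀ i, (γ * ρ i) ^ 2 ≠ 1 ↔ i ≠ k := by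
    intro i
    refine not_congr ⟨fun h => d.unique gm hn hX γ h1 h2 i k h hk, ?_⟩
    rintro rfl; exact hk
  simp_rw [hu]
  have e : (Finset.univ.filter (fun i : ZMod n => (∀ a : X, (γ * ρ i) • a ≠ a) ∧ i ≠ k))
      = (Finset.univ.filter (fun i : ZMod n => ∀ a : X, (γ * ρ i) • a ≠ a)).erase k := by
    ext i; simp [and_comm]
  rw [e, Finset.card_erase_eq_ite]
  have e3 : (Finset.univ.filter (fun a : X => (γ * ρ k) • a = a)).card = 0 ↔
      k ∈ (Finset.univ.filter (fun i : ZMod n => ∀ a : X, (γ * ρ i) • a ≠ a)) := by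
    rw [Finset.card_eq_zero, Finset.filter_eq_empty_iff]; simp
  by_cases hh : k ∈ (Finset.univ.filter (fun i : ZMod n => ∀ a : X, (γ * ρ i) • a ≠ a))
  · have := Finset.card_pos.mpr ⟨k, hh⟩
    rw [if_pos hh, if_pos (e3.2 hh)]
    omega
  · rw [if_neg hh, if_neg (fun h => hh (e3.1 h))]; rfl

open Classical in
lemma Dih.half (n : ℕ) [NeZero n] : (Finset.univ.filter (fun i : ZMod n => i + i ≠ 0)).card
    + (if Even n then 2 else 1) = n := by
  have h0 : n ≠ 0 := NeZero.ne n
  have e : (Finset.univ.filter (fun i : ZMod n => i + i = 0)).card = if Even n then 2 else 1 := by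
    have hi : ∀ i : ZMod n, i + i = 0 ↔ i = 0 ∨ 2 * i.val = n := by
      intro i
      rw [← ZMod.neg_eq_self_iff, add_eq_zero_iff_neg_eq]
    simp_rw [hi]
    split_ifs with hn
    · obtain ⟨m, hm⟩ := hn
      rw [Finset.card_eq_two]
      have hv : (m : ZMod n).val = m := ZMod.val_natCast_of_lt (by omega)
      refine ⟨0, (m : ZMod n), ?_, ?_⟩
      · intro h
        rw [← h, ZMod.val_zero] at hv
        omega
      · ext i
        simp only [Finset.mem_filter, Finset.mem_univ, true_and, Finset.mem_insert,
          Finset.mem_singleton]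
        refine or_congr Iff.rfl ⟨fun h => ?_, ?_⟩
        · apply ZMod.val_injective
          omega
        · rintro rfl; omega
    · rw [Finset.card_eq_one]
      refine ⟨0, ?_⟩
      ext i
      simp only [Finset.mem_filter, Finset.mem_univ, true_and, Finset.mem_singleton]
      refine ⟨?_, Or.inl⟩
      rintro (h | h)
      · exact h
      · exact absurd ⟨i.val, by omega⟩ hn
  have := Finset.card_filter_add_card_filter_not (s := (Finset.univ : Finset (ZMod n)))
    (fun i : ZMod n => i + i = 0)
  rw [Finset.card_univ, ZMod.card, e] at this
  rw [add_comm]; exact this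

open Classical in
theorem Dih.final (q : ℕ) (hq : 2 ≤ q) {ρ σ : ZMod (q + 1) → G} (d : Dih ρ σ)
    (gm : Geo G X (q + 1)) [Finite X]
    (hX : Nat.card X = q + 1) (D : Subgroup G)
    (hD : ∀ x, x ∈ D ↔ (∃ i, x = ρ i) ∨ ∃ i, x = σ i) (g : G) :
    Nat.card {p : G × G // (p.1 ^ (q + 1) = 1 ∧ p.1 ^ 2 ≠ 1) ∧ p.2 ∈ D ∧ p.1 * p.2 = g} =
      if Even q then q else q - 1 := by
  have := Fintype.ofFinite X
  have hn : 3 ≤ q + 1 := by omega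
  have hcount : Nat.card {p : G × G //
      (p.1 ^ (q + 1) = 1 ∧ p.1 ^ 2 ≠ 1) ∧ p.2 ∈ D ∧ p.1 * p.2 = g} =
      (Finset.univ.filter (fun i : ZMod (q + 1) =>
        (g * ρ i) ^ (q + 1) = 1 ∧ (g * ρ i) ^ 2 ≠ 1)).card +
      (Finset.univ.filter (fun i : ZMod (q + 1) =>
        (g * σ i) ^ (q + 1) = 1 ∧ (g * σ i) ^ 2 ≠ 1)).card := by
    rw [← Fintype.card_subtype, ← Fintype.card_subtype, ← Fintype.card_sum,
      ← Nat.card_eq_fintype_card]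
    symm
    apply Nat.card_congr
    refine Equiv.ofBijective (Sum.elim
      (fun i => ⟨(g * ρ i.1, (ρ i.1)⁻¹), i.2, D.inv_mem ((hD _).2 (Or.inl ⟨_, rfl⟩)), by simp⟩)
      (fun i => ⟨(g * σ i.1, (σ i.1)⁻¹), i.2, D.inv_mem ((hD _).2 (Or.inr ⟨_, rfl⟩)), by simp⟩))
      ⟨?_, ?_⟩
    · rintro (⟨i, hi⟩ | ⟨i, hi⟩) (⟨j, hj⟩ | ⟨j, hj⟩) h
      · simp at h
        simp [d.inj h]
      · simp at h
        exact absurd h (d.ne _ _)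
      · simp at h
        exact absurd h.symm (d.ne _ _)
      · simp at h
        simp [d.sinj h]
    · rintro ⟨⟨x, y⟩, hx, hy, hxy⟩
      simp only at hx hy hxy
      have hxg : x = g * y⁻¹ := by rw [← hxy]; group
      rcases (hD _).1 (D.inv_mem hy) with ⟨i, hi⟩ | ⟨i, hi⟩
      · rw [hi] at hxg
        refine ⟨Sum.inl ⟨i, by rw [← hxg]; exact hx⟩, ?_⟩
        simp [hxg, ← hi]
      · rw [hi] at hxg
        refine ⟨Sum.inr ⟨i, by rw [← hxg]; exact hx⟩, ?_⟩
        simp [hxg, ← hi]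
  rw [hcount]
  have hs : ∀ i, (σ i) ^ 2 = 1 := fun i => by rw [sq, d.ss]; simp [d.r0]
  have hr : ∀ i, ((ρ i) ^ (q + 1) = 1 ∧ (ρ i) ^ 2 ≠ 1) ↔ i + i ≠ 0 := fun i => by
    rw [sq, d.rr, d.r_pow_n, ← d.r0, d.inj.ne_iff]; simp
  have hhalf := Dih.half (q + 1)
  by_cases hgD : g ∈ D
  · have hfin : ∀ k : ZMod (q + 1),
        (Finset.univ.filter (fun i : ZMod (q + 1) => (i + k) + (i + k) ≠ 0)).card =
        (Finset.univ.filter (fun i : ZMod (q + 1) => i + i ≠ 0)).card := by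
      intro k
      rw [← Fintype.card_subtype, ← Fintype.card_subtype]
      exact Fintype.card_congr ((Equiv.addRight k).subtypeEquiv (fun a => by simp))
    have hfin2 : (Finset.univ.filter (fun i : ZMod (q + 1) => i + i ≠ 0)).card =
        if Even q then q else q - 1 := by
      simp only [Nat.even_iff] at hhalf ⊢
      split_ifs at hhalf ⊢ <;> omega
    rcases (hD g).1 hgD with ⟨k, rfl⟩ | ⟨k, rfl⟩
    · simp_rw [d.rr, d.rs, hr, hs, add_comm k, hfin k]
      simp [hfin2]
    · simp_rw [d.sr, d.ss, hr, hs, sub_eq_add_neg, hfin (-k)]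
      simp [hfin2]
  · have h1 : ∀ i, g ≠ ρ i := fun i h => hgD ((hD _).2 (Or.inl ⟨i, h⟩))
    have h2 : ∀ i, g ≠ σ i := fun i h => hgD ((hD _).2 (Or.inr ⟨i, h⟩))
    have e1 : ∀ i, g * σ 0 * ρ i = g * σ i := fun i => by rw [mul_assoc, d.sr, zero_add]
    have e2 : ∀ i, g * σ 0 * σ i = g * ρ i := fun i => by rw [mul_assoc, d.ss, sub_zero]
    have h1' : ∀ i, g * σ 0 ≠ ρ i := fun i h => by
      rw [← eq_mul_inv_iff_mul_eq, d.sinv, d.rs] at h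
      exact h2 _ h
    have h2' : ∀ i, g * σ 0 ≠ σ i := fun i h => by
      rw [← eq_mul_inv_iff_mul_eq, d.sinv, d.ss] at h
      exact h1 _ h
    obtain ⟨k, hk⟩ := d.existsInv gm hn hX g
    obtain ⟨l, hl⟩ := d.existsInv gm hn hX (g * σ 0)
    have c1 := d.count gm hn hX g h1 h2 k hk
    have c2 := d.count gm hn hX (g * σ 0) h1' h2' l hl
    have m2 := d.main gm hn hX (g * σ 0) h1' h2' k (by rw [e2, hk])
    simp_rw [e1] at c2 hl m2
    simp_rw [e2] at m2
    have m1 := d.main gm hn hX g h1 h2 l hl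
    have f1 := gm.fixcard hX (g * ρ k) (fun h => by
      rw [mul_eq_one_iff_eq_inv, d.inv] at h; exact h1 _ h) hk
    have f2 := gm.fixcard hX (g * σ l) (fun h => by
      rw [mul_eq_one_iff_eq_inv, d.sinv] at h; exact h2 _ h) hl
    simp only [Nat.even_iff]
    split_ifs at c1 c2 ⊢ <;> omega

end


section mat
open Matrix
open scoped LinearAlgebra.Projectivization
variable {K : Type*} [Field K]

/-- The wedge of two plane vectors. -/
def wedge (v w : Fin 2 → K) : K := v 0 * w 1 - v 1 * w 0

lemma lin0 (v w : Fin 2 → K) (h : wedge v w ≠ 0) (M : Matrix (Fin 2) (Fin 2) K)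
    (h1 : M *ᵥ v = 0) (h2 : M *ᵥ w = 0) : M = 0 := by
  have a0 := congrFun h1 0
  have a1 := congrFun h1 1
  have b0 := congrFun h2 0
  have b1 := congrFun h2 1
  simp [Matrix.mulVec, dotProduct, Fin.sum_univ_two] at a0 a1 b0 b1
  have key : ∀ x y : K, x * v 0 + y * v 1 = 0 → x * w 0 + y * w 1 = 0 → x = 0 ∧ y = 0 := by
    intro x y e1 e2
    constructor
    · apply (mul_eq_zero.mp (?_ : x * wedge v w = 0)).resolve_right h
      unfold wedge; linear_combination w 1 * e1 - v 1 * e2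
    · apply (mul_eq_zero.mp (?_ : y * wedge v w = 0)).resolve_right h
      unfold wedge; linear_combination v 0 * e2 - w 0 * e1
  ext i j
  fin_cases i <;> fin_cases j <;> simp
  · exact (key _ _ a0 b0).1
  · exact (key _ _ a0 b0).2
  · exact (key _ _ a1 b1).1
  · exact (key _ _ a1 b1).2

lemma wedge_ne (v w : Fin 2 → K) (hv : v ≠ 0) (hw : w ≠ 0)
    (h : Projectivization.mk K v hv ≠ Projectivization.mk K w hw) : wedge v w ≠ 0 := by
  intro hz
  apply h
  rw [Projectivization.mk_eq_mk_iff']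
  unfold wedge at hz
  by_cases h0 : w 0 = 0
  · have h1 : w 1 ≠ 0 := by
      intro h1; apply hw; ext i; fin_cases i <;> simp [h0, h1]
    refine ⟨v 1 / w 1, ?_⟩
    ext i; fin_cases i <;> simp
    · rw [div_mul_eq_mul_div, div_eq_iff h1]; linear_combination -hz
    · field_simp
  · refine ⟨v 0 / w 0, ?_⟩
    ext i; fin_cases i <;> simp
    · field_simp
    · rw [div_mul_eq_mul_div, div_eq_iff h0]; linear_combination hz

lemma ch2 (M : Matrix (Fin 2) (Fin 2) K) : M * M = M.trace • M - M.det • 1 := by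
  ext i j
  fin_cases i <;> fin_cases j <;>
    simp [Matrix.mul_apply, Fin.sum_univ_two, Matrix.trace, Matrix.det_fin_two] <;> ring

lemma eig (M : Matrix (Fin 2) (Fin 2) K) (v : Fin 2 → K) (hv : v ≠ 0) (α : K)
    (h : M *ᵥ v = α • v) : α * α = M.trace * α - M.det := by
  have e : (M * M) *ᵥ v = (M.trace • M - M.det • 1) *ᵥ v := by rw [ch2]
  rw [← Matrix.mulVec_mulVec, h, Matrix.mulVec_smul, h, Matrix.sub_mulVec, Matrix.smul_mulVec, h,
    Matrix.smul_mulVec, Matrix.one_mulVec] at e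
  obtain ⟨i, hi⟩ := Function.ne_iff.mp hv
  have := congrFun e i
  simp at this hi
  apply mul_right_cancel₀ hi
  linear_combination this

lemma eig_ex (M : Matrix (Fin 2) (Fin 2) K) (α : K)
    (h : α * α = M.trace * α - M.det) : ∃ v, v ≠ 0 ∧ M *ᵥ v = α • v := by
  have : (M - α • (1 : Matrix (Fin 2) (Fin 2) K)).det = 0 := by
    simp [Matrix.det_fin_two, Matrix.trace] at h ⊢
    linear_combination h
  obtain ⟨v, hv, e⟩ := Matrix.exists_mulVec_eq_zero_iff.mpr this
  refine ⟨v, hv, ?_⟩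
  rw [Matrix.sub_mulVec, Matrix.smul_mulVec, Matrix.one_mulVec, sub_eq_zero] at e
  exact e

lemma pow_free [Fintype K] (M : Matrix (Fin 2) (Fin 2) K)
    (h : ∀ v, v ≠ 0 → ∀ α : K, M *ᵥ v ≠ α • v) :
    M ^ (Fintype.card K + 1) = M.det • 1 := by
  have hr : ∀ α : K, ¬ M.charpoly.IsRoot α := by
    intro α hα
    rw [Matrix.charpoly_fin_two] at hα
    simp at hα
    obtain ⟨v, hv, e⟩ := eig_ex M α (by linear_combination hα)
    exact h v hv α e
  have hd : M.charpoly.natDegree = 2 := by simp [Matrix.charpoly_natDegree_eq_dim]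
  have irr : Irreducible M.charpoly :=
    Polynomial.irreducible_of_degree_le_three_of_not_isRoot (by rw [hd]; simp) hr
  have := Fact.mk irr
  let f := M.charpoly
  let L := AdjoinRoot f
  let ρ : L := AdjoinRoot.root f
  have hρ : ρ ^ 2 - algebraMap K L M.trace * ρ + algebraMap K L M.det = 0 := by
    have : Polynomial.aeval ρ f = 0 := by
      rw [AdjoinRoot.aeval_eq]; exact AdjoinRoot.mk_self
    simp only [f, Matrix.charpoly_fin_two] at this
    simpa using this
  have hρq : (ρ ^ Fintype.card K) ^ 2 - algebraMap K L M.trace * ρ ^ Fintype.card K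
      + algebraMap K L M.det = 0 := by
    have : Polynomial.aeval (ρ ^ Fintype.card K) f = 0 := by
      rw [← Polynomial.expand_aeval, FiniteField.expand_card, map_pow, AdjoinRoot.aeval_eq,
        AdjoinRoot.mk_self, zero_pow Fintype.card_ne_zero]
    simp only [f, Matrix.charpoly_fin_two] at this
    simpa using this
  have hne : ρ ^ Fintype.card K ≠ ρ := by
    intro he
    have : ∃ a : K, algebraMap K L a = ρ := by
      have hpr : ∏ a : K, (Polynomial.X - Polynomial.C a)
          = (Polynomial.X ^ Fintype.card K - Polynomial.X : Polynomial K) := by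
        have hm : (Polynomial.X ^ Fintype.card K - Polynomial.X : Polynomial K).Monic :=
          Polynomial.monic_X_pow_sub (by
            rw [Polynomial.degree_X]; exact_mod_cast Fintype.one_lt_card)
        have := Polynomial.prod_multiset_X_sub_C_of_monic_of_roots_card_eq hm (by
          rw [FiniteField.roots_X_pow_card_sub_X,
            FiniteField.X_pow_card_sub_X_natDegree_eq K Fintype.one_lt_card]; rfl)
        rw [FiniteField.roots_X_pow_card_sub_X] at this
        exact this
      have h0 := congrArg (Polynomial.aeval ρ) hpr
      rw [map_prod, map_sub, map_pow, Polynomial.aeval_X, he, sub_self,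
        Finset.prod_eq_zero_iff] at h0
      obtain ⟨a, -, ha⟩ := h0
      refine ⟨a, ?_⟩
      simp only [map_sub, Polynomial.aeval_X, Polynomial.aeval_C] at ha
      exact (sub_eq_zero.mp ha).symm
    obtain ⟨a, ha⟩ := this
    apply hr a
    rw [← ha, ← map_pow, ← map_mul, ← map_sub, ← map_add] at hρ
    have := (map_eq_zero _).mp hρ
    rw [Matrix.charpoly_fin_two]; simpa using this
  have hprod : ρ ^ (Fintype.card K + 1) = algebraMap K L M.det := by
    have : (ρ ^ Fintype.card K - ρ) *
        (ρ ^ Fintype.card K + ρ - algebraMap K L M.trace) = 0 := by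
      linear_combination hρq - hρ
    have := (mul_eq_zero.mp this).resolve_left (sub_ne_zero.mpr hne)
    rw [pow_succ]
    linear_combination ρ * this - hρ
  have hdvd : f ∣ Polynomial.X ^ (Fintype.card K + 1) - Polynomial.C M.det := by
    rw [← AdjoinRoot.mk_eq_zero]
    simp only [map_sub, map_pow, AdjoinRoot.mk_X, AdjoinRoot.mk_C]
    rw [sub_eq_zero]; exact hprod
  obtain ⟨g, hg⟩ := hdvd
  have := congrArg (Polynomial.aeval M) hg
  rw [map_mul, Matrix.aeval_self_charpoly, zero_mul] at this
  simp only [map_sub, map_pow, Polynomial.aeval_X, Polynomial.aeval_C] at this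
  rw [sub_eq_zero] at this
  rw [this, Algebra.algebraMap_eq_smul_one]

lemma pow_fix [Fintype K] (M : Matrix (Fin 2) (Fin 2) K) (hM : M.det ≠ 0)
    (v : Fin 2 → K) (hv : v ≠ 0) (α : K) (h : M *ᵥ v = α • v) (μ : K)
    (hp : M ^ (Fintype.card K + 1) = μ • 1) : ∃ ν : K, M * M = ν • 1 := by
  have ha := eig M v hv α h
  have hα : α ≠ 0 := by
    rintro rfl
    apply hM; linear_combination ha
  by_cases hg : M.trace - α = α
  · have ht : M.trace = 2 * α := by linear_combination hg
    have hN : M.det = α * α := by rw [ht] at ha; linear_combination ha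
    set ν := M - α • (1 : Matrix (Fin 2) (Fin 2) K) with hν
    have hMν : M = α • 1 + ν := by rw [hν]; abel
    have hνν : M * ν = α • ν := by
      rw [hν, mul_sub, ch2, ht, hN]
      ext i j
      simp; ring
    have key : ∀ k : ℕ, M ^ (k + 1) = α ^ (k + 1) • (1 : Matrix (Fin 2) (Fin 2) K)
        + ((k + 1 : K) * α ^ k) • ν := by
      intro k
      induction k with
      | zero => simpa using hMν
      | succ k ih =>
        rw [pow_succ', ih, mul_add, mul_smul_comm, mul_smul_comm, hνν, mul_one]
        nth_rewrite 1 [hMν]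
        ext i j
        simp; ring
    rw [key] at hp
    have hc : (Fintype.card K : K) = 0 := FiniteField.cast_card_eq_zero K
    rw [hc, pow_succ, FiniteField.pow_card] at hp
    simp only [zero_add, one_mul] at hp
    have : ν = (α⁻¹ * (μ - α * α)) • 1 := by
      rw [mul_smul, sub_smul, ← hp, add_sub_cancel_left, smul_smul, inv_mul_cancel₀ hα, one_smul]
    exact ⟨(α + α⁻¹ * (μ - α * α)) * (α + α⁻¹ * (μ - α * α)), by
      rw [hMν, this, ← add_smul, smul_mul_smul_comm, one_mul]⟩
  · obtain ⟨w, hw, e⟩ := eig_ex M (M.trace - α) (by linear_combination ha)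
    refine ⟨μ, ?_⟩
    rw [← hp, pow_succ]
    congr 1
    rw [← sub_eq_zero]
    have hpow : ∀ (u : Fin 2 → K) (β : K), M *ᵥ u = β • u → (M - M ^ Fintype.card K) *ᵥ u = 0 := by
      intro u β hu
      have : ∀ k : ℕ, (M ^ k) *ᵥ u = β ^ k • u := by
        intro k
        induction k with
        | zero => simp
        | succ k ih => rw [pow_succ', ← Matrix.mulVec_mulVec, ih, Matrix.mulVec_smul, hu, smul_smul,
            pow_succ]
      rw [Matrix.sub_mulVec, this, hu, FiniteField.pow_card, sub_self]
    refine lin0 v w ?_ _ (hpow _ _ h) (hpow _ _ e)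
    apply wedge_ne v w hv hw
    intro heq
    rw [Projectivization.mk_eq_mk_iff'] at heq
    obtain ⟨a, rfl⟩ := heq
    rw [Matrix.mulVec_smul, e] at h
    apply hg
    obtain ⟨i, hi⟩ := Function.ne_iff.mp hv
    have := congrFun h i
    simp at this hi
    have hi2 : a * w i ≠ 0 := mul_ne_zero hi.1 hi.2
    apply mul_right_cancel₀ hi2
    linear_combination this

end mat

section geo
open Matrix
open scoped LinearAlgebra.Projectivization
variable {K : Type*} [Field K]

lemma mk_one_iff (x : GL (Fin 2) K) :
    (QuotientGroup.mk x : PGL2 K) = 1 ↔ ∃ μ : K, x.val = μ • 1 := by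
  rw [QuotientGroup.eq_one_iff, Matrix.GeneralLinearGroup.mem_center_iff_val_mem_range_scalar]
  constructor
  · rintro ⟨a, ha⟩
    exact ⟨a, by rw [← ha, Matrix.scalar_apply, Matrix.smul_one_eq_diagonal]⟩
  · rintro ⟨a, ha⟩
    exact ⟨a, by rw [ha, Matrix.scalar_apply, Matrix.smul_one_eq_diagonal]⟩

lemma mk_eq_of (x y : GL (Fin 2) K) (μ : K) (h : x.val = μ • y.val) :
    (QuotientGroup.mk x : PGL2 K) = QuotientGroup.mk y := by
  rw [← mul_inv_eq_one, ← QuotientGroup.mk_inv, ← QuotientGroup.mk_mul, mk_one_iff]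
  refine ⟨μ, ?_⟩
  rw [Units.val_mul, h, smul_mul_assoc, Units.mul_inv]

lemma center_smul (z : GL (Fin 2) K) (hz : z ∈ Subgroup.center (GL (Fin 2) K))
    (a : ℙ K (Fin 2 → K)) : z • a = a := by
  rw [Matrix.GeneralLinearGroup.mem_center_iff_val_mem_range_scalar] at hz
  obtain ⟨μ, hμ⟩ := hz
  induction a using Projectivization.ind with
  | h v hv =>
    rw [Projectivization.smul_mk, Projectivization.mk_eq_mk_iff']
    refine ⟨μ, ?_⟩
    show μ • v = z.val *ᵥ v
    rw [← hμ, Matrix.scalar_apply, ← Matrix.smul_one_eq_diagonal, Matrix.smul_mulVec,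
      Matrix.one_mulVec]

/-- The action of `PGL2 K` on the projective line, as a homomorphism. -/
noncomputable def actHom (K : Type*) [Field K] :
    PGL2 K →* Equiv.Perm (ℙ K (Fin 2 → K)) :=
  QuotientGroup.lift _ (MulAction.toPermHom (GL (Fin 2) K) (ℙ K (Fin 2 → K))) (by
    intro z hz
    ext a
    exact center_smul z hz a)

/-- The action of `PGL2 K` on the projective line. -/
@[reducible]
noncomputable def pglAct (K : Type*) [Field K] : MulAction (PGL2 K) (ℙ K (Fin 2 → K)) :=
  MulAction.compHom _ (actHom K)

attribute [local instance] pglAct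

lemma act_iff (x : GL (Fin 2) K) (v w : Fin 2 → K) (hv : v ≠ 0) (hw : w ≠ 0) :
    (QuotientGroup.mk x : PGL2 K) • Projectivization.mk K v hv = Projectivization.mk K w hw ↔
      ∃ α : K, x.val *ᵥ v = α • w := by
  have : (QuotientGroup.mk x : PGL2 K) • Projectivization.mk K v hv
    = x • Projectivization.mk K v hv := rfl
  rw [this, Projectivization.smul_mk, Projectivization.mk_eq_mk_iff']
  exact exists_congr fun a => eq_comm

lemma mk_sq (x : GL (Fin 2) K) :
    (QuotientGroup.mk x : PGL2 K) ^ 2 = 1 ↔ ∃ μ : K, x.val * x.val = μ • 1 := by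
  rw [← QuotientGroup.mk_pow, mk_one_iff, Units.val_pow_eq_pow_val, sq]

lemma sq_of_trace (x : GL (Fin 2) K) (h : x.val.trace = 0) :
    (QuotientGroup.mk x : PGL2 K) ^ 2 = 1 := by
  rw [mk_sq]
  refine ⟨-x.val.det, ?_⟩
  rw [ch2, h]; simp

lemma trace_of_sq (x : GL (Fin 2) K) (h1 : (QuotientGroup.mk x : PGL2 K) ≠ 1)
    (h : (QuotientGroup.mk x : PGL2 K) ^ 2 = 1) : x.val.trace = 0 := by
  rw [mk_sq] at h
  obtain ⟨μ, h⟩ := h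
  by_contra ht
  apply h1
  rw [mk_one_iff]
  refine ⟨x.val.trace⁻¹ * (μ + x.val.det), ?_⟩
  rw [ch2, sub_eq_iff_eq_add, ← add_smul] at h
  rw [mul_smul, ← h, smul_smul, inv_mul_cancel₀ ht, one_smul]

lemma scal_of (x : GL (Fin 2) K) (v w : Fin 2 → K) (h : wedge v w ≠ 0) (α : K)
    (h1 : x.val *ᵥ v = α • v) (h2 : x.val *ᵥ w = α • w) : (QuotientGroup.mk x : PGL2 K) = 1 := by
  rw [mk_one_iff]
  refine ⟨α, sub_eq_zero.mp (lin0 v w h _ ?_ ?_)⟩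
  · rw [Matrix.sub_mulVec, Matrix.smul_mulVec, Matrix.one_mulVec, h1, sub_self]
  · rw [Matrix.sub_mulVec, Matrix.smul_mulVec, Matrix.one_mulVec, h2, sub_self]

lemma trace_eq_add (M : Matrix (Fin 2) (Fin 2) K) (v w : Fin 2 → K) (hv : v ≠ 0) (hw : w ≠ 0)
    (α β : K) (h1 : M *ᵥ v = α • v) (h2 : M *ᵥ w = β • w) (h : α ≠ β) : M.trace = α + β := by
  have e1 := eig M v hv α h1
  have e2 := eig M w hw β h2
  apply mul_left_cancel₀ (sub_ne_zero.mpr h)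
  linear_combination e2 - e1

theorem geo [Fintype K] : Geo (PGL2 K) (ℙ K (Fin 2 → K)) (Fintype.card K + 1) where
  fix3 := by
    intro h a b c hab hac hbc ha hb hc
    induction h using QuotientGroup.induction_on with | _ x => ?_
    induction a using Projectivization.ind with | h u hu => ?_
    induction b using Projectivization.ind with | h v hv => ?_
    induction c using Projectivization.ind with | h w hw => ?_
    obtain ⟨α, ha⟩ := (act_iff ..).1 ha
    obtain ⟨β, hb⟩ := (act_iff ..).1 hb
    obtain ⟨γ, hc⟩ := (act_iff ..).1 hc
    have wab := wedge_ne _ _ _ _ hab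
    have wac := wedge_ne _ _ _ _ hac
    have wbc := wedge_ne _ _ _ _ hbc
    by_cases e1 : α = β
    · subst e1; exact scal_of x u v wab α ha hb
    by_cases e2 : α = γ
    · subst e2; exact scal_of x u w wac α ha hc
    have t1 := trace_eq_add _ _ _ hu hv _ _ ha hb e1
    have t2 := trace_eq_add _ _ _ hu hw _ _ ha hc e2
    have : β = γ := by linear_combination t2 - t1
    subst this
    exact scal_of x v w wbc β hb hc
  swap := by
    intro h a b hab ha hb
    induction h using QuotientGroup.induction_on with | _ x => ?_
    induction a using Projectivization.ind with | h u hu => ?_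
    induction b using Projectivization.ind with | h v hv => ?_
    obtain ⟨α, ha⟩ := (act_iff ..).1 ha
    obtain ⟨β, hb⟩ := (act_iff ..).1 hb
    rw [← QuotientGroup.mk_pow]
    apply scal_of _ u v (wedge_ne _ _ _ _ hab) (α * β)
    · rw [sq, Units.val_mul, ← Matrix.mulVec_mulVec, ha, Matrix.mulVec_smul, hb, smul_smul]
    · rw [sq, Units.val_mul, ← Matrix.mulVec_mulVec, hb, Matrix.mulVec_smul, ha, smul_smul,
        mul_comm]
  pow_of_free := by
    intro h hf
    induction h using QuotientGroup.induction_on with | _ x => ?_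
    rw [← QuotientGroup.mk_pow, mk_one_iff]
    refine ⟨x.val.det, ?_⟩
    rw [Units.val_pow_eq_pow_val]
    apply pow_free
    intro v hv α he
    exact hf (Projectivization.mk K v hv) ((act_iff ..).2 ⟨α, he⟩)
  sq_of_fix := by
    intro h a ha hp
    induction h using QuotientGroup.induction_on with | _ x => ?_
    induction a using Projectivization.ind with | h u hu => ?_
    obtain ⟨α, ha⟩ := (act_iff ..).1 ha
    rw [← QuotientGroup.mk_pow, mk_one_iff] at hp
    obtain ⟨μ, hp⟩ := hp
    rw [Units.val_pow_eq_pow_val] at hp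
    rw [mk_sq]
    exact pow_fix x.val ((Matrix.isUnit_iff_isUnit_det _).1 x.isUnit).ne_zero u hu α ha μ hp
  exInv := by
    intro c g hf
    induction c using QuotientGroup.induction_on with | _ x => ?_
    induction g using QuotientGroup.induction_on with | _ γ => ?_
    have hex : ∃ u v : K, (u ≠ 0 ∨ v ≠ 0) ∧ u * γ.val.trace + v * (γ.val * x.val).trace = 0 := by
      by_cases h : γ.val.trace = 0
      · exact ⟨1, 0, by simp, by simp [h]⟩
      · exact ⟨(γ.val * x.val).trace, -γ.val.trace, Or.inr (neg_ne_zero.mpr h), by ring⟩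
    obtain ⟨u, v, huv, ht⟩ := hex
    have hdet : (u • (1 : Matrix (Fin 2) (Fin 2) K) + v • x.val).det ≠ 0 := by
      intro h0
      obtain ⟨w, hw, e⟩ := Matrix.exists_mulVec_eq_zero_iff.mpr h0
      rw [Matrix.add_mulVec, Matrix.smul_mulVec, Matrix.smul_mulVec, Matrix.one_mulVec] at e
      by_cases hv : v = 0
      · rw [hv, zero_smul, add_zero, smul_eq_zero] at e
        rcases e with e | e
        · exact huv.elim (fun h => h e) (fun h => h hv)
        · exact hw e
      · apply hf (Projectivization.mk K w hw)
        rw [act_iff]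
        refine ⟨-(v⁻¹ * u), ?_⟩
        rw [neg_smul, mul_smul, eq_neg_iff_add_eq_zero]
        have := congrArg (fun z => v⁻¹ • z) e
        simp only [smul_add, smul_zero] at this
        rw [smul_smul v⁻¹ v, inv_mul_cancel₀ hv, one_smul, add_comm] at this
        exact this
    let Y : GL (Fin 2) K := Matrix.GeneralLinearGroup.mkOfDetNeZero _ hdet
    have hY : Y.val = u • (1 : Matrix (Fin 2) (Fin 2) K) + v • x.val := rfl
    refine ⟨QuotientGroup.mk Y, ?_, ?_⟩
    · show (QuotientGroup.mk Y : PGL2 K) * QuotientGroup.mk x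
        = QuotientGroup.mk x * QuotientGroup.mk Y
      rw [← QuotientGroup.mk_mul, ← QuotientGroup.mk_mul]
      congr 1
      ext1
      rw [Units.val_mul, Units.val_mul, hY]
      simp [add_mul, mul_add]
    · rw [← QuotientGroup.mk_mul]
      apply sq_of_trace
      rw [Units.val_mul, hY, mul_add, mul_smul_comm, mul_smul_comm, mul_one, Matrix.trace_add,
        Matrix.trace_smul, Matrix.trace_smul]
      exact ht
  uniqInv := by
    intro c t k hk ht1 ht2 h1 h2
    induction c using QuotientGroup.induction_on with | _ x => ?_
    induction t using QuotientGroup.induction_on with | _ τ => ?_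
    rw [← QuotientGroup.mk_pow, ← QuotientGroup.mk_mul] at h1 h2
    have e1 := trace_of_sq _ ht1 ht2
    have e2 := trace_of_sq _ h1 h2
    have hsp : ∀ k : ℕ, ∃ a b : K, x.val ^ k = a • 1 + b • x.val := by
      intro k
      induction k with
      | zero => exact ⟨1, 0, by simp⟩
      | succ k ih =>
        obtain ⟨a, b, ih⟩ := ih
        refine ⟨-(b * x.val.det), a + b * x.val.trace, ?_⟩
        rw [pow_succ, ih, add_mul, smul_mul_assoc, smul_mul_assoc, ch2, one_mul]
        module
    obtain ⟨a, b, hab⟩ := hsp k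
    have hb : b ≠ 0 := by
      rintro rfl
      apply hk
      rw [← QuotientGroup.mk_pow, mk_one_iff]
      refine ⟨a, ?_⟩
      rw [Units.val_pow_eq_pow_val, hab]; simp
    rw [← QuotientGroup.mk_mul]
    apply sq_of_trace
    rw [Units.val_mul, Units.val_pow_eq_pow_val, hab, mul_add, mul_smul_comm, mul_smul_comm,
      mul_one, Matrix.trace_add, Matrix.trace_smul, Matrix.trace_smul, e1, smul_zero, zero_add,
      smul_eq_zero] at e2
    exact e2.resolve_left hb
  two := by
    intro h t a b hab hne tne ha hb hta htb ht2 hinv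
    induction h using QuotientGroup.induction_on with | _ x => ?_
    induction t using QuotientGroup.induction_on with | _ τ => ?_
    induction a using Projectivization.ind with | h u hu => ?_
    induction b using Projectivization.ind with | h v hv => ?_
    obtain ⟨α, ha⟩ := (act_iff ..).1 ha
    obtain ⟨β, hb⟩ := (act_iff ..).1 hb
    obtain ⟨γ, hta⟩ := (act_iff ..).1 hta
    obtain ⟨δ, htb⟩ := (act_iff ..).1 htb
    have hw := wedge_ne _ _ _ _ hab
    have hcomm : x * τ = τ * x := by
      ext1
      rw [Units.val_mul, Units.val_mul]
      refine sub_eq_zero.mp (lin0 u v hw _ ?_ ?_)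
      · rw [Matrix.sub_mulVec, ← Matrix.mulVec_mulVec, ← Matrix.mulVec_mulVec, ha, hta,
          Matrix.mulVec_smul, Matrix.mulVec_smul, ha, hta, smul_comm, sub_self]
      · rw [Matrix.sub_mulVec, ← Matrix.mulVec_mulVec, ← Matrix.mulVec_mulVec, hb, htb,
          Matrix.mulVec_smul, Matrix.mulVec_smul, hb, htb, smul_comm, sub_self]
    have hx2 : (QuotientGroup.mk x : PGL2 K) ^ 2 = 1 := by
      rw [← QuotientGroup.mk_mul, ← hcomm, QuotientGroup.mk_mul, mul_inv_cancel_right] at hinv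
      rw [sq]; nth_rewrite 2 [hinv]; exact mul_inv_cancel _
    have hαβ : α ≠ β := by
      rintro rfl; exact hne (scal_of x u v hw _ ha hb)
    have hγδ : γ ≠ δ := by
      rintro rfl; exact tne (scal_of τ u v hw _ hta htb)
    have t1 := trace_eq_add _ _ _ hu hv _ _ ha hb hαβ
    have t2 := trace_eq_add _ _ _ hu hv _ _ hta htb hγδ
    rw [trace_of_sq x hne hx2] at t1
    rw [trace_of_sq τ tne ht2] at t2
    have hγ : γ ≠ 0 := by
      rintro rfl
      apply hγδ; linear_combination t2
    have hβ : β = -α := by linear_combination -t1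
    have hδ : δ = -γ := by linear_combination -t2
    subst hβ hδ
    apply mk_eq_of x τ (α / γ)
    refine sub_eq_zero.mp (lin0 u v hw _ ?_ ?_)
    · rw [Matrix.sub_mulVec, Matrix.smul_mulVec, ha, hta, smul_smul, div_mul_cancel₀ _ hγ, sub_self]
    · rw [Matrix.sub_mulVec, Matrix.smul_mulVec, hb, htb, smul_smul, mul_neg, div_mul_cancel₀ _ hγ,
        sub_self]

theorem pgl2_aux (q : ℕ) (K : Type*) [Field K] [Fintype K]
    (hK : Fintype.card K = q) (D : Subgroup (PGL2 K))
    (hD : Nonempty (D ≃* DihedralGroup (q + 1))) (g : PGL2 K) :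
    Nat.card {p : PGL2 K × PGL2 K //
        (p.1 ^ (q + 1) = 1 ∧ p.1 ^ 2 ≠ 1) ∧ p.2 ∈ D ∧ p.1 * p.2 = g} =
      if Even q then q else q - 1 := by
  subst hK
  obtain ⟨e⟩ := hD
  have hX : Nat.card (ℙ K (Fin 2 → K)) = Fintype.card K + 1 := by
    rw [Projectivization.card_of_finrank_two K _ (by simp), Nat.card_eq_fintype_card]
  have : Finite (ℙ K (Fin 2 → K)) := by
    apply Nat.finite_of_card_ne_zero; omega
  have hinj : Function.Injective (fun z => ((e.symm z : D) : PGL2 K)) :=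
    Subtype.val_injective.comp e.symm.injective
  have hm : ∀ y z, ((e.symm y : D) : PGL2 K) * ((e.symm z : D) : PGL2 K)
      = ((e.symm (y * z) : D) : PGL2 K) := by
    intro y z; rw [map_mul]; rfl
  refine Dih.final (ρ := fun i => ((e.symm (DihedralGroup.r i) : D) : PGL2 K))
    (σ := fun i => ((e.symm (DihedralGroup.sr i) : D) : PGL2 K))
    (Fintype.card K) Fintype.one_lt_card ?_ geo hX D ?_ g
  · constructor
    · intro i j; simp only [hm, DihedralGroup.r_mul_r]
    · intro i j; simp only [hm, DihedralGroup.r_mul_sr]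
    · intro i j; simp only [hm, DihedralGroup.sr_mul_r]
    · intro i j; simp only [hm, DihedralGroup.sr_mul_sr]
    · simp only [DihedralGroup.r_zero, map_one, OneMemClass.coe_one]
    · intro i j h; exact DihedralGroup.r.inj (hinj h)
    · intro i j h; exact DihedralGroup.sr.inj (hinj h)
    · intro i j h
      have := hinj h
      cases this
  · intro x
    constructor
    · intro hx
      rcases h : e ⟨x, hx⟩ with i | i
      · left; refine ⟨i, ?_⟩; rw [← h]; simp
      · right; refine ⟨i, ?_⟩; rw [← h]; simp
    · rintro (⟨i, rfl⟩ | ⟨i, rfl⟩) <;> exact Subtype.property _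

end geo


/-- Let `q` be a prime power, `K` a finite field with `q` elements, and
`G = PGL(2, K)`.  Let `D` be a subgroup of `G` isomorphic as an abstract group
to the dihedral group of order `2(q+1)`, and let
`A = {g ∈ G : g^(q+1) = 1 ∧ g^2 ≠ 1}`.  Then for every `g ∈ G`, the number of
pairs `(x, d) ∈ A × D` with `x * d = g` equals `q` if `q` is even and `q - 1`
if `q` is odd. -/
theorem pgl2_code_count (q : ℕ) (hq : IsPrimePow q) (K : Type*) [Field K] [Fintype K]
    (hK : Fintype.card K = q) (D : Subgroup (PGL2 K))
    (hD : Nonempty (D ≃* DihedralGroup (q + 1))) (g : PGL2 K) :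
    Nat.card {p : PGL2 K × PGL2 K //
        (p.1 ^ (q + 1) = 1 ∧ p.1 ^ 2 ≠ 1) ∧ p.2 ∈ D ∧ p.1 * p.2 = g} =
      if Even q then q else q - 1 := by
  exact pgl2_aux q K hK D hD g
end

section
/- For a, b ∈ F, the 𝔽_q-linear map f_{a,b} : F → F, x ↦ a·x + b·x^q, is bijective if and only if a^{q+1} ≠ b^{q+1}. -/
/-- Let `q` be a prime power and `F` a finite field with `q^2` elements.
For `a, b ∈ F`, the `𝔽_q`-linear map `f_{a,b} : F → F`, `x ↦ a*x + b*x^q`,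
is bijective if and only if `a^(q+1) ≠ b^(q+1)`. -/
theorem f_ab_bijective_iff (q : ℕ) (hq : IsPrimePow q) (F : Type*) [Field F] [Fintype F]
    (hF : Fintype.card F = q ^ 2) (a b : F) :
    Function.Bijective (fun x : F => a * x + b * x ^ q) ↔ a ^ (q + 1) ≠ b ^ (q + 1) := by
  have hq1 : 1 < q := hq.one_lt
  have hadd : ∀ x y : F, (x + y) ^ q = x ^ q + y ^ q := by
    obtain ⟨p, k, hp, hk, rfl⟩ := hq
    have hp' : p.Prime := hp.nat_prime
    have : Fact p.Prime := ⟨hp'⟩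
    have : CharP F p := by
      obtain ⟨r, hr⟩ := CharP.exists F
      obtain ⟨n, hrp, hn⟩ := FiniteField.card F r
      have h1 : r ∣ (p ^ k) ^ 2 := by
        rw [← hF, hn]; exact dvd_pow_self _ n.ne_zero
      have h2 : r = p := (Nat.prime_dvd_prime_iff_eq hrp hp').1
        (hrp.dvd_of_dvd_pow (hrp.dvd_of_dvd_pow h1))
      exact h2 ▸ hr
    intro x y
    exact add_pow_char_pow x y p k
  have hqq : ∀ x : F, (x ^ q) ^ q = x := by
    intro x
    rw [← pow_mul, ← sq, ← hF, FiniteField.pow_card]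
  have hfq : ∀ x : F, (a * x + b * x ^ q) ^ q = a ^ q * x ^ q + b ^ q * x := by
    intro x
    rw [hadd, mul_pow, mul_pow, hqq]
  constructor
  · intro hf hab
    have hg : ∀ y : F, a ^ q * y = b * y ^ q := by
      intro y
      obtain ⟨x, rfl⟩ := hf.2 y
      simp only [hfq]
      rw [pow_succ, pow_succ] at hab
      linear_combination x * hab
    have hb : a ^ q = b := by simpa using hg 1
    have hb0 : b ≠ 0 := by
      intro h0
      have ha0 : a = 0 := by
        rw [h0] at hb
        exact pow_eq_zero_iff (by omega) |>.1 hb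
      have := @hf.1 0 1 (by simp [ha0, h0])
      exact zero_ne_one this
    have hx : ∀ x : F, x ^ q = x := by
      intro x
      have := hg x
      rw [hb] at this
      exact (mul_left_cancel₀ hb0 this).symm
    have hz : (Polynomial.X ^ q - Polynomial.X : Polynomial F) = 0 := by
      apply Polynomial.eq_zero_of_natDegree_lt_card_of_eval_eq_zero _
        (f := fun x : F => x) Function.injective_id
      · intro x; simp [hx]
      · rw [FiniteField.X_pow_card_sub_X_natDegree_eq F hq1, hF]
        nlinarith
    exact FiniteField.X_pow_card_sub_X_ne_zero F hq1 hz
  · intro hab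
    apply Finite.injective_iff_bijective.1
    have key : ∀ x y : F, a * x + b * x ^ q = y →
        (a ^ (q + 1) - b ^ (q + 1)) * x = a ^ q * y - b * y ^ q := by
      rintro x y rfl
      rw [hfq]; ring
    intro x y hxy
    have h1 := key x _ rfl
    have h2 := key y _ hxy.symm
    exact mul_left_cancel₀ (sub_ne_zero.2 hab) (h1.trans h2.symm)
end

section
/- Suppose a, b ∈ F satisfy a^{q+1} ≠ b^{q+1}, and set a′ = a^q/(a^{q+1} − b^{q+1}) and b′ = −b/(a^{q+1} − b^{q+1}). Then f_{a′,b′} is a two-sided compositional inverse of f_{a,b}, i.e., f_{a′,b′}(f_{a,b}(x)) = x and f_{a,b}(f_{a′,b′}(x)) = x for all x ∈ F. -/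
/-- Let `q` be a prime power and `F` a finite field with `q^2` elements.
Suppose `a, b ∈ F` satisfy `a^(q+1) ≠ b^(q+1)`, and set
`a' = a^q / (a^(q+1) - b^(q+1))` and `b' = -b / (a^(q+1) - b^(q+1))`.
Then `f_{a',b'}` is a two-sided compositional inverse of `f_{a,b}`. -/
theorem f_ab_inverse (q : ℕ) (hq : IsPrimePow q) (F : Type*) [Field F] [Fintype F]
    (hF : Fintype.card F = q ^ 2) (a b : F) (hab : a ^ (q + 1) ≠ b ^ (q + 1))
    (a' b' : F) (ha' : a' = a ^ q / (a ^ (q + 1) - b ^ (q + 1)))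
    (hb' : b' = -b / (a ^ (q + 1) - b ^ (q + 1))) :
    ∀ x : F,
      a' * (a * x + b * x ^ q) + b' * (a * x + b * x ^ q) ^ q = x ∧
      a * (a' * x + b' * x ^ q) + b * (a' * x + b' * x ^ q) ^ q = x := by
  obtain ⟨p, k, hp, hk, rfl⟩ := hq
  have hp' : p.Prime := hp.nat_prime
  have : Fact p.Prime := ⟨hp'⟩
  obtain ⟨r, hr⟩ := CharP.exists F
  obtain ⟨n, hrp, hn⟩ := FiniteField.card F r
  have hpr : p = r := by
    have h1 : p ∣ r ^ (n : ℕ) := by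
      rw [← hn, hF, ← pow_mul]
      exact dvd_pow_self p (by positivity)
    exact (Nat.prime_dvd_prime_iff_eq hp' hrp).1 (hp'.dvd_of_dvd_pow h1)
  subst hpr
  set q := p ^ k with hqdef
  have hadd : ∀ x y : F, (x + y) ^ q = x ^ q + y ^ q := fun x y => add_pow_char_pow x y p k
  have hsub : ∀ x y : F, (x - y) ^ q = x ^ q - y ^ q := fun x y => sub_pow_char_pow x y k
  have hneg : ∀ x : F, (-x) ^ q = -x ^ q := fun x => by
    have h := hsub 0 x
    have hq0 : q ≠ 0 := pow_ne_zero _ hp'.ne_zero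
    simpa [hq0] using h
  have hinv : ∀ x : F, (x ^ q) ^ q = x := fun x => by
    rw [← pow_mul, ← sq, ← hF, FiniteField.pow_card]
  have hD : a ^ q * a - b ^ q * b ≠ 0 := by
    rw [← pow_succ, ← pow_succ]
    exact sub_ne_zero.2 hab
  rw [pow_succ, pow_succ] at ha' hb'
  have hDq : (a ^ q * a - b ^ q * b) ^ q = a ^ q * a - b ^ q * b := by
    rw [hsub, mul_pow, mul_pow, hinv, hinv]; ring
  intro x
  have haq : a' ^ q = a / (a ^ q * a - b ^ q * b) := by
    rw [ha', div_pow, hDq, hinv]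
  have hbq : b' ^ q = -b ^ q / (a ^ q * a - b ^ q * b) := by
    rw [hb', div_pow, hDq, hneg]
  constructor
  · rw [hadd, mul_pow, mul_pow, hinv, ha', hb']
    generalize a ^ q = A at *
    generalize b ^ q = B at *
    generalize x ^ q = X at *
    generalize hE : A * a - B * b = D at *
    field_simp
    linear_combination x * hE
  · rw [hadd, mul_pow, mul_pow, hinv, haq, hbq, ha', hb']
    generalize a ^ q = A at *
    generalize b ^ q = B at *
    generalize x ^ q = X at *
    generalize hE : A * a - B * b = D at *
    field_simp
    linear_combination x * hE
end

section
/- Let t, c, d ∈ F with t ≠ 0, d ≠ 0 and c^{q+1} ≠ d^{q+1}, and set s = c·d^{-1} (so s^{q+1} ≠ 1). Then for every x ∈ F, f_{c,d}^{-1}(f_{t,0}(f_{c,d}(x))) = ((t·s^{q+1} − t^q)/(s^{q+1} − 1))·x + (((t − t^q)·s^q)/(s^{q+1} − 1))·x^q, i.e., the conjugate of f_{t,0} by f_{c,d} equals L_{t,s}. -/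
/-- Let `q` be a prime power and `F` a finite field with `q^2` elements.
Let `t, c, d ∈ F` with `t ≠ 0`, `d ≠ 0` and `c^(q+1) ≠ d^(q+1)`, and set
`s = c * d⁻¹` (so `s^(q+1) ≠ 1`).  Then for every `x ∈ F`,
`f_{c,d}⁻¹ (f_{t,0} (f_{c,d} x)) = L_{t,s} x`, i.e. the conjugate of `f_{t,0}`
by `f_{c,d}` equals `L_{t,s}`. -/
theorem conj_f_t0_eq_L (q : ℕ) (hq : IsPrimePow q) (F : Type*) [Field F] [Fintype F]
    (hF : Fintype.card F = q ^ 2) (t c d : F) (ht : t ≠ 0) (hd : d ≠ 0)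
    (hcd : c ^ (q + 1) ≠ d ^ (q + 1)) (s : F) (hs : s = c * d⁻¹) :
    s ^ (q + 1) ≠ 1 ∧
    ∀ x : F,
      Function.invFun (fun y : F => c * y + d * y ^ q) (t * (c * x + d * x ^ q)) =
        ((t * s ^ (q + 1) - t ^ q) / (s ^ (q + 1) - 1)) * x +
        ((t - t ^ q) * s ^ q / (s ^ (q + 1) - 1)) * x ^ q := by
  have hfrob : ∃ φ : F →+* F, ∀ x, φ x = x ^ q := by
    obtain ⟨p, k, hp, hk, rfl⟩ := hq
    have hp' : p.Prime := hp.nat_prime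
    have : Fact p.Prime := ⟨hp'⟩
    have hch : CharP F p := by
      obtain ⟨r, hr⟩ := CharP.exists F
      obtain ⟨n, hrp, hn⟩ := FiniteField.card F r
      have h1 : r ∣ p := by
        have : r ∣ (p ^ k) ^ 2 := by
          rw [← hF, hn]
          exact dvd_pow_self r n.ne_zero
        exact hrp.dvd_of_dvd_pow (hrp.dvd_of_dvd_pow this)
      have h2 : r = p := (Nat.prime_dvd_prime_iff_eq hrp hp').1 h1
      rwa [h2] at hr
    have : ExpChar F p := ExpChar.prime hp'
    exact ⟨iterateFrobenius F p k, fun x => iterateFrobenius_def p k x⟩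
  obtain ⟨φ, hφ⟩ := hfrob
  have hφφ : ∀ x, φ (φ x) = x := by
    intro x
    rw [hφ, hφ, ← pow_mul, ← sq, ← hF, FiniteField.pow_card]
  have hc : c = s * d := by rw [hs]; field_simp
  simp only [pow_succ, ← hφ] at hcd ⊢
  have hN : φ s * s ≠ 1 := by
    intro h
    apply hcd
    rw [hc, map_mul]
    linear_combination (φ d * d) * h
  refine ⟨hN, fun x => ?_⟩
  have hN' : φ s * s - 1 ≠ 0 := sub_ne_zero.2 hN
  have hinj : Function.Injective (fun y : F => c * y + d * φ y) := by
    intro y z hyz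
    have h1 : c * (y - z) + d * φ (y - z) = 0 := by
      rw [map_sub]
      linear_combination hyz
    have h2 := congrArg φ h1
    simp only [map_add, map_mul, hφφ, map_zero] at h2
    have h3 : (φ c * c - φ d * d) * (y - z) = 0 := by
      linear_combination φ c * h1 - d * h2
    exact sub_eq_zero.1 ((mul_eq_zero.1 h3).resolve_left (sub_ne_zero.2 hcd))
  have key : (fun y : F => c * y + d * φ y)
      (((t * (φ s * s) - φ t) / (φ s * s - 1)) * x +
        ((t - φ t) * φ s / (φ s * s - 1)) * φ x) = t * (c * x + d * φ x) := by
    simp only [map_add, map_mul, map_div₀, map_sub, map_one, hφφ, hc]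
    rw [mul_comm s (φ s)]
    generalize hD : φ s * s - 1 = D at hN'
    have hD2 : φ s * s = D + 1 := by linear_combination hD
    field_simp
    linear_combination (t * s * x + t * φ x) * hD2
  rw [← key]
  exact Function.leftInverse_invFun hinj _
end

section
/- Let t ∈ F, t ≠ 0. An invertible 𝔽_q-linear map g : F → F is conjugate to f_{t,0} in GL(V) if and only if g = f_{t,0}, or g = f_{t^q,0}, or g = L_{t,s} for some s ∈ F with s ≠ 0 and s^{q+1} ≠ 1. -/
/-- Let `q` be a prime power and `F` a finite field with `q^2` elements, regarded as a
2-dimensional vector space over the subfield `𝔽_q = {x : x^q = x}`.  Let `t ∈ F`, `t ≠ 0`.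
An invertible `𝔽_q`-linear map `g : F → F` is conjugate to `f_{t,0}` in `GL(V)` if and only
if `g = f_{t,0}`, or `g = f_{t^q,0}`, or `g = L_{t,s}` for some `s ≠ 0` with `s^(q+1) ≠ 1`. -/
theorem conjugate_to_f_t0_iff (q : ℕ) (hq : IsPrimePow q) (F : Type*) [Field F] [Fintype F]
    (hF : Fintype.card F = q ^ 2) (t : F) (ht : t ≠ 0) (g : F → F)
    (hgadd : ∀ x y : F, g (x + y) = g x + g y)
    (hgsmul : ∀ c x : F, c ^ q = c → g (c * x) = c * g x)
    (hgbij : Function.Bijective g) :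
    (∃ h : F → F, (∀ x y : F, h (x + y) = h x + h y) ∧
        (∀ c x : F, c ^ q = c → h (c * x) = c * h x) ∧
        Function.Bijective h ∧ ∀ x : F, h (g x) = t * h x) ↔
      (g = fun x : F => t * x) ∨ (g = fun x : F => t ^ q * x) ∨
        ∃ s : F, s ≠ 0 ∧ s ^ (q + 1) ≠ 1 ∧
          g = fun x : F => ((t * s ^ (q + 1) - t ^ q) / (s ^ (q + 1) - 1)) * x +
            ((t - t ^ q) * s ^ q / (s ^ (q + 1) - 1)) * x ^ q := by
  classical
  have hq1 : 1 < q := hq.one_lt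
  obtain ⟨p, k, hp, hk, hpk⟩ := hq
  have hp' : p.Prime := hp.nat_prime
  have : Fact p.Prime := ⟨hp'⟩
  have : CharP F p := by
    obtain ⟨r, hr⟩ := CharP.exists F
    have := hr
    obtain ⟨n, hrp, hn⟩ := FiniteField.card F r
    have h1 : p ∣ r ^ (n : ℕ) := by
      rw [← hn, hF, ← hpk]
      exact dvd_pow (dvd_pow_self p hk.ne') two_ne_zero
    have h2 : p = r := (Nat.prime_dvd_prime_iff_eq hp' hrp).1 (hp'.dvd_of_dvd_pow h1)
    rw [h2]; exact hr
  obtain ⟨σ, hσ⟩ : ∃ σ : F →+* F, ∀ x, σ x = x ^ q :=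
    ⟨iterateFrobenius F p k, fun x => by rw [iterateFrobenius_def, hpk]⟩
  have hσσ : ∀ x, σ (σ x) = x := by
    intro x
    rw [hσ, hσ, ← pow_mul, ← sq, ← hF, FiniteField.pow_card]
  obtain ⟨w, hw⟩ : ∃ w : F, σ w ≠ w := by
    by_contra! hc
    have hX := FiniteField.X_pow_card_sub_X_ne_zero F hq1
    have h1 : (Finset.univ : Finset F).card ≤ (Polynomial.X ^ q - Polynomial.X : Polynomial F).natDegree := by
      apply Polynomial.card_le_degree_of_subset_roots
      intro x _
      rw [Polynomial.mem_roots hX]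
      simp [Polynomial.IsRoot, ← hσ, hc x]
    rw [FiniteField.X_pow_card_sub_X_natDegree_eq F hq1, Finset.card_univ, hF] at h1
    nlinarith
  simp only [pow_succ _ q, ← hσ] at *
  have hw' : σ w - w ≠ 0 := sub_ne_zero.2 hw
  constructor
  · rintro ⟨h, hadd, hsmul, hbij, hg⟩
    obtain ⟨a, b, hab⟩ : ∃ a b : F, ∀ x, h x = a * x + b * σ x := by
      refine ⟨h 1 - (h w - w * h 1) / (σ w - w), (h w - w * h 1) / (σ w - w), fun x => ?_⟩
      obtain ⟨d, hd⟩ : ∃ d, d = (σ x - x) / (σ w - w) := ⟨_, rfl⟩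
      have hdd : σ d = d := by
        rw [hd, map_div₀, map_sub, map_sub, hσσ, hσσ, ← neg_sub, ← neg_sub (σ w), neg_div_neg_eq]
      have hd2 : d * (σ w - w) = σ x - x := by rw [hd]; field_simp
      have hcc : σ (x - d * w) = x - d * w := by
        rw [map_sub, map_mul, hdd]; linear_combination -hd2
      have e : h x = (x - d * w) * h 1 + d * h w := by
        rw [← hsmul _ _ hcc, ← hsmul _ _ hdd, ← hadd]; congr 1; ring
      have hs : σ x = x + d * (σ w - w) := by rw [hd2]; ring
      rw [e, hs]; field_simp; ring
    by_cases hb : b = 0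
    · left
      funext x
      have ha : a ≠ 0 := by
        rintro rfl
        have := hbij.1 (a₁ := 0) (a₂ := 1) (by simp [hab, hb])
        exact zero_ne_one this
      have := hg x
      simp only [hab, hb, zero_mul, add_zero] at this
      apply mul_left_cancel₀ ha; rw [this]; ring
    by_cases ha : a = 0
    · right; left
      funext x
      have := hg x
      simp only [hab, ha, zero_mul, zero_add] at this
      have h2 : σ (g x) = t * σ x := by
        apply mul_left_cancel₀ hb; rw [this]; ring
      rw [← hσσ (g x), h2, map_mul, hσσ]
    right; right
    obtain ⟨s, hs⟩ : ∃ s, s = a / b := ⟨_, rfl⟩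
    have has : a = b * s := by rw [hs]; field_simp
    have hN : σ s * s ≠ 1 := by
      intro hN
      have key : ∀ y, σ s * y = σ y := by
        intro y
        obtain ⟨x, hx⟩ := hbij.2 (b * y)
        have hy : y = s * x + σ x := by
          apply mul_left_cancel₀ hb; rw [← hx, hab, has]; ring
        rw [hy, map_add, map_mul, hσσ]; linear_combination x * hN
      have h1 := key 1
      rw [map_one, mul_one] at h1
      have := key w
      rw [h1, one_mul] at this
      exact hw this.symm
    have hN' : σ s * s - 1 ≠ 0 := sub_ne_zero.2 hN
    refine ⟨s, by rw [hs]; exact div_ne_zero ha hb, hN, ?_⟩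
    funext x
    have h1 : s * g x + σ (g x) = t * (s * x + σ x) := by
      apply mul_left_cancel₀ hb
      have := hg x
      rw [hab, hab, has] at this
      linear_combination this
    have h2 := congrArg σ h1
    simp only [map_add, map_mul, hσσ] at h2
    field_simp
    linear_combination σ s * h1 - h2
  · rintro (rfl | rfl | ⟨s, hs, hN, rfl⟩)
    · exact ⟨id, fun _ _ => rfl, fun _ _ _ => rfl, Function.bijective_id, fun _ => rfl⟩
    · refine ⟨σ, map_add σ, fun c x hc => by rw [map_mul, hc], ?_, fun x => by rw [map_mul, hσσ]⟩
      exact ⟨σ.injective, fun y => ⟨σ y, hσσ y⟩⟩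
    · have hN' : σ s * s - 1 ≠ 0 := sub_ne_zero.2 hN
      refine ⟨fun x => s * x + σ x, fun x y => by simp only [map_add]; ring,
        fun c x hc => by simp only [map_mul, hc]; ring, ?_, ?_⟩
      · apply Finite.injective_iff_bijective.1
        intro x y hxy
        have h1 : s * x + σ x = s * y + σ y := hxy
        have h2 := congrArg σ h1
        simp only [map_add, map_mul, hσσ] at h2
        apply mul_left_cancel₀ hN'
        linear_combination σ s * h1 - h2
      · intro x
        have hN2 : s * σ s - 1 ≠ 0 := by rwa [mul_comm]
        simp only [map_add, map_mul, map_div₀, map_sub, hσσ, map_one]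
        rw [mul_comm s (σ s)]
        field_simp
        ring
end

section
/- Let t ∈ F with t ≠ 0 and t^q ≠ t. Then the conjugacy class of f_{t,0} in GL(V), i.e., the set {h^{-1} ∘ f_{t,0} ∘ h : h ∈ GL(V)}, has exactly q(q−1) elements. -/
theorem conj_aux_add (q : ℕ) (hq : IsPrimePow q) (F : Type*) [Field F] [Fintype F]
    (hF : Fintype.card F = q ^ 2) (x y : F) : (x + y) ^ q = x ^ q + y ^ q := by
  obtain ⟨p, k, hp, hk, rfl⟩ := hq
  have hp' : p.Prime := hp.nat_prime
  haveI : Fact p.Prime := ⟨hp'⟩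
  haveI : CharP F p := by
    obtain ⟨r, hr⟩ := CharP.exists F
    have hrp : r.Prime := CharP.char_is_prime F r
    have : r ∣ Fintype.card F := by
      rw [← CharP.cast_eq_zero_iff F r]; simp
    rw [hF, ← pow_mul] at this
    have := (Nat.prime_dvd_prime_iff_eq hrp hp').1 (hrp.dvd_of_dvd_pow this)
    exact this ▸ hr
  exact add_pow_char_pow x y p k

theorem conj_aux_dec (q : ℕ) (hq : IsPrimePow q) (F : Type*) [Field F] [Fintype F]
    (hF : Fintype.card F = q ^ 2) (s : F) (hs : s ^ q ≠ s) (x : F) :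
    ((x ^ q - x) / (s ^ q - s)) ^ q = (x ^ q - x) / (s ^ q - s) ∧
    (x - (x ^ q - x) / (s ^ q - s) * s) ^ q = x - (x ^ q - x) / (s ^ q - s) * s := by
  have hadd := conj_aux_add q hq F hF
  have hsub : ∀ x y : F, (x - y) ^ q = x ^ q - y ^ q := fun x y => by
    have := hadd (x - y) y
    rw [sub_add_cancel] at this
    rw [this]; ring
  have hqq : ∀ x : F, (x ^ q) ^ q = x := fun x => by
    rw [← pow_mul, ← sq, ← hF, FiniteField.pow_card]
  have h0 : s ^ q - s ≠ 0 := sub_ne_zero.2 hs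
  have h1 : s - s ^ q ≠ 0 := sub_ne_zero.2 (Ne.symm hs)
  have hb : ((x ^ q - x) / (s ^ q - s)) ^ q = (x ^ q - x) / (s ^ q - s) := by
    rw [div_pow, hsub, hsub, hqq, hqq, div_eq_div_iff h1 h0]; ring
  refine ⟨hb, ?_⟩
  rw [hsub, mul_pow, hb]
  have := div_mul_cancel₀ (x ^ q - x) h0
  linear_combination -this

theorem conj_aux_uniq (q : ℕ) (hq : IsPrimePow q) (F : Type*) [Field F] [Fintype F]
    (hF : Fintype.card F = q ^ 2) (s : F) (hs : s ^ q ≠ s) (a b : F)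
    (ha : a ^ q = a) (hb : b ^ q = b) :
    ((a + b * s) ^ q - (a + b * s)) / (s ^ q - s) = b := by
  have h0 : s ^ q - s ≠ 0 := sub_ne_zero.2 hs
  rw [conj_aux_add q hq F hF, mul_pow, ha, hb, div_eq_iff h0]; ring

theorem conj_aux_card (q : ℕ) (hq : IsPrimePow q) (F : Type*) [Field F] [Fintype F]
    (hF : Fintype.card F = q ^ 2) (s : F) (hs : s ^ q ≠ s) :
    Set.ncard {c : F | c ^ q = c} = q := by
  let e : F ≃ {c : F | c ^ q = c} × {c : F | c ^ q = c} :=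
    { toFun := fun x => (⟨_, (conj_aux_dec q hq F hF s hs x).2⟩,
        ⟨_, (conj_aux_dec q hq F hF s hs x).1⟩)
      invFun := fun p => p.1.1 + p.2.1 * s
      left_inv := fun x => by simp
      right_inv := fun ⟨⟨a, ha⟩, ⟨b, hb⟩⟩ => by
        have := conj_aux_uniq q hq F hF s hs a b ha hb
        simp [this] }
  have h := Nat.card_congr e
  rw [Nat.card_prod, Nat.card_eq_fintype_card, hF, Nat.card_coe_set_eq, ← sq] at h
  exact (Nat.pow_left_injective (n := 2) (by norm_num) h).symm

/-- Let `q` be a prime power and `F` a finite field with `q^2` elements, regarded as a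
2-dimensional vector space over the subfield `𝔽_q = {x : x^q = x}`.  Let `t ∈ F` with
`t ≠ 0` and `t^q ≠ t`.  Then the conjugacy class of `f_{t,0}` in `GL(V)` has exactly
`q(q-1)` elements.  (Here `g` lies in the conjugacy class of `f_{t,0}` iff
`h ∘ g = f_{t,0} ∘ h` for some invertible `𝔽_q`-linear `h`.) -/
theorem conjugacy_class_card (q : ℕ) (hq : IsPrimePow q) (F : Type*) [Field F] [Fintype F]
    (hF : Fintype.card F = q ^ 2) (t : F) (ht : t ≠ 0) (htq : t ^ q ≠ t) :
    Set.ncard {g : F → F | ∃ h : F → F,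
        (∀ x y : F, h (x + y) = h x + h y) ∧
        (∀ c x : F, c ^ q = c → h (c * x) = c * h x) ∧
        Function.Bijective h ∧ ∀ x : F, h (g x) = t * h x} = q * (q - 1) := by
  have hadd := conj_aux_add q hq F hF
  have hqq : ∀ x : F, (x ^ q) ^ q = x := fun x => by
    rw [← pow_mul, ← sq, ← hF, FiniteField.pow_card]
  have hq0 : q ≠ 0 := hq.ne_zero
  have hcard : Set.ncard {c : F | c ^ q = c}ᶜ = q * (q - 1) := by
    rw [Set.ncard_compl, conj_aux_card q hq F hF t htq, Nat.card_eq_fintype_card, hF,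
      Nat.mul_sub, mul_one, sq]
  rw [← hcard]
  have key : ∀ g h : F → F, (∀ x y : F, h (x + y) = h x + h y) →
      (∀ c x : F, c ^ q = c → h (c * x) = c * h x) → Function.Bijective h →
      (∀ x : F, h (g x) = t * h x) → (g 1) ^ q ≠ g 1 ∧ ∀ a b : F, a ^ q = a → b ^ q = b →
      g (a + b * g 1) = a * g 1 + b * ((t + t ^ q) * g 1 + -(t * t ^ q)) := by
    intro g h h1 h2 h3 h4
    have hz : h 0 = 0 := by simpa using h1 0 0
    have hone : h 1 ≠ 0 := fun hh => one_ne_zero (h3.1 (hh.trans hz.symm))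
    constructor
    · intro hs
      have := h4 1
      rw [← mul_one (g 1), h2 _ _ hs] at this
      have := mul_right_cancel₀ hone this
      exact htq (this ▸ hs)
    · intro a b ha hb
      have hT : (t + t ^ q) ^ q = t + t ^ q := by rw [hadd, hqq, add_comm]
      have hN : (-(t * t ^ q)) ^ q = -(t * t ^ q) := by
        have e1 : (t * t ^ q) ^ q = t * t ^ q := by rw [mul_pow, hqq, mul_comm]
        have := hadd (-(t * t ^ q)) (t * t ^ q)
        rw [neg_add_cancel, zero_pow hq0, e1] at this
        linear_combination -this
      have hn : h (-(t * t ^ q)) = -(t * t ^ q) * h 1 := by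
        rw [← h2 _ _ hN, mul_one]
      have ha1 : h a = a * h 1 := by rw [← h2 _ _ ha, mul_one]
      apply h3.1
      rw [h4, h1, h1, h2 b _ hb, h2 a _ ha, h2 b _ hb, h1, h2 _ _ hT, hn, ha1, h4]
      ring
  refine Set.ncard_congr (fun g _ => g 1) ?_ ?_ ?_
  · rintro g ⟨h, h1, h2, h3, h4⟩
    exact (key g h h1 h2 h3 h4).1
  · rintro g g' ⟨h, h1, h2, h3, h4⟩ ⟨h', h1', h2', h3', h4'⟩ hgg
    obtain ⟨hs, hk⟩ := key g h h1 h2 h3 h4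
    obtain ⟨hs', hk'⟩ := key g' h' h1' h2' h3' h4'
    funext x
    obtain ⟨hb, ha⟩ := conj_aux_dec q hq F hF (g 1) hs x
    have e := hk _ _ ha hb
    have hgg' : g 1 = g' 1 := hgg
    rw [hgg'] at e ha hb
    have e' := hk' _ _ ha hb
    have := e.trans e'.symm
    simpa using this
  · intro s hs
    have hs : s ^ q ≠ s := hs
    have h0 : s ^ q - s ≠ 0 := sub_ne_zero.2 hs
    let h : F → F := fun x => x + (x ^ q - x) / (s ^ q - s) * (t - s)
    have h1 : ∀ x y : F, h (x + y) = h x + h y := fun x y => by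
      simp only [h, hadd]; ring
    have h2 : ∀ c x : F, c ^ q = c → h (c * x) = c * h x := fun c x hc => by
      simp only [h, mul_pow, hc]; ring
    have h3 : Function.Injective h := by
      let H : F →+ F := AddMonoidHom.mk' h h1
      refine (injective_iff_map_eq_zero H).2 fun x hx => ?_
      have hx : x + (x ^ q - x) / (s ^ q - s) * (t - s) = 0 := hx
      obtain ⟨hb, ha⟩ := conj_aux_dec q hq F hF s hs x
      have := conj_aux_uniq q hq F hF t htq _ _ ha hb
      have e : x - (x ^ q - x) / (s ^ q - s) * s + (x ^ q - x) / (s ^ q - s) * t = 0 := by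
        linear_combination hx
      rw [e, zero_pow hq0, sub_zero, zero_div] at this
      rw [← this] at hx
      simpa using hx
    have h3' : Function.Bijective h := Finite.injective_iff_bijective.1 h3
    choose g hg using fun x => h3'.2 (t * h x)
    refine ⟨g, ⟨h, h1, h2, h3', hg⟩, ?_⟩
    apply h3
    rw [hg]
    simp [h, div_self h0]
end

section
/- Let t, t′ ∈ F be nonzero. Then f_{t,0} and f_{t′,0} are conjugate in GL(V) if and only if t′ = t or t′ = t^q. -/
/-- Let `q` be a prime power and `F` a finite field with `q^2` elements, regarded as a
2-dimensional vector space over the subfield `𝔽_q = {x : x^q = x}`.  Let `t, t' ∈ F` be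
nonzero.  Then `f_{t,0}` and `f_{t',0}` are conjugate in `GL(V)` if and only if
`t' = t` or `t' = t^q`. -/
theorem f_t0_conjugate_iff (q : ℕ) (hq : IsPrimePow q) (F : Type*) [Field F] [Fintype F]
    (hF : Fintype.card F = q ^ 2) (t t' : F) (ht : t ≠ 0) (ht' : t' ≠ 0) :
    (∃ h : F → F, (∀ x y : F, h (x + y) = h x + h y) ∧
        (∀ c x : F, c ^ q = c → h (c * x) = c * h x) ∧
        Function.Bijective h ∧ ∀ x : F, h (t' * x) = t * h x) ↔
      t' = t ∨ t' = t ^ q := by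
  have hqq : ∀ x : F, (x ^ q) ^ q = x := by
    intro x
    rw [← pow_mul, ← pow_two, ← hF]
    exact FiniteField.pow_card x
  have hadd : ∀ x y : F, (x + y) ^ q = x ^ q + y ^ q := by
    obtain ⟨p, k, hp, hk, rfl⟩ := hq
    have hp' : p.Prime := hp.nat_prime
    obtain ⟨r, hr⟩ := CharP.exists F
    obtain ⟨n, hrp, hn⟩ := FiniteField.card F r
    have hdvd : r ∣ (p ^ k) ^ 2 := by
      rw [← hF, hn]
      exact dvd_pow_self r n.pos.ne'
    have hrp' : r = p :=
      (Nat.prime_dvd_prime_iff_eq hrp hp').1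
        (hrp.dvd_of_dvd_pow (hrp.dvd_of_dvd_pow hdvd))
    subst hrp'
    have : Fact r.Prime := ⟨hrp⟩
    intro x y
    exact add_pow_char_pow x y r k
  constructor
  · rintro ⟨h, ha, hs, hb, hc⟩
    have h0 : h 0 = 0 := by
      have := ha 0 0
      simpa using this
    have h1 : h 1 ≠ 0 := by
      intro h1
      exact one_ne_zero (hb.1 (h1.trans h0.symm))
    have e1 : h (t' * (t' * 1)) = t * (t * h 1) := by rw [hc, hc]
    have e2 : h ((t' + t' ^ q) * (t' * 1)) = (t' + t' ^ q) * (t * h 1) := by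
      rw [hs _ _ (by rw [hadd, hqq, add_comm]), hc]
    have e3 : h ((t' * t' ^ q) * 1) = (t' * t' ^ q) * h 1 := by
      rw [hs _ _ (by rw [mul_pow, hqq, mul_comm])]
    have e4 : (t' + t' ^ q) * (t' * 1) = t' * (t' * 1) + (t' * t' ^ q) * 1 := by ring
    rw [e4, ha, e1, e3] at e2
    have e5 : h 1 * ((t - t') * (t - t' ^ q)) = 0 := by linear_combination e2
    rcases mul_eq_zero.1 ((mul_eq_zero.1 e5).resolve_left h1) with e | e
    · exact Or.inl (sub_eq_zero.1 e).symm
    · right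
      rw [sub_eq_zero.1 e, hqq]
  · rintro (rfl | rfl)
    · exact ⟨id, fun _ _ => rfl, fun _ _ _ => rfl, Function.bijective_id, fun _ => rfl⟩
    · refine ⟨fun x => x ^ q, hadd, fun c x hc => ?_, ?_, fun x => ?_⟩
      · simp only [mul_pow, hc]
      · exact Function.Involutive.bijective hqq
      · simp only [mul_pow, hqq]
end

section
/- Suppose q is odd. Let c ∈ F with c ≠ 0, let d ∈ F with d^q = d and d ≠ 0, and let x₀ ∈ F satisfy c·x₀² + d·x₀ + c^q = 0. Set Δ = d² − 4·c^{q+1} (an element of the subfield 𝔽_q). Then x₀^{q+1} = 1 if and only if Δ = 0 or there is no z ∈ F with z^q = z and z² = Δ. -/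
/-- Let `q` be an odd prime power and `F` a finite field with `q^2` elements.
Let `c ∈ F`, `c ≠ 0`, let `d` be a nonzero element of the subfield `𝔽_q = {x : x^q = x}`,
and let `x₀ ∈ F` satisfy `c·x₀² + d·x₀ + c^q = 0`.  Set `Δ = d² − 4·c^(q+1)`.
Then `x₀^(q+1) = 1` iff `Δ = 0` or `Δ` is a nonsquare in `𝔽_q`. -/
theorem root_norm_one_iff_disc (q : ℕ) (hq : IsPrimePow q) (hodd : Odd q)
    (F : Type*) [Field F] [Fintype F] (hF : Fintype.card F = q ^ 2)
    (c : F) (hc : c ≠ 0) (d : F) (hdq : d ^ q = d) (hd : d ≠ 0)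
    (x₀ : F) (hx₀ : c * x₀ ^ 2 + d * x₀ + c ^ q = 0) :
    x₀ ^ (q + 1) = 1 ↔
      d ^ 2 - 4 * c ^ (q + 1) = 0 ∨
        ¬∃ z : F, z ^ q = z ∧ z ^ 2 = d ^ 2 - 4 * c ^ (q + 1) := by
  have hσ : ∃ σ : F →+* F, ∀ x, σ x = x ^ q := by
    obtain ⟨p, k, hp, hk, rfl⟩ := hq
    have hp' : p.Prime := hp.nat_prime
    haveI : Fact p.Prime := ⟨hp'⟩
    obtain ⟨r, hr⟩ := CharP.exists F
    obtain ⟨n, hrp, hn⟩ := FiniteField.card F r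
    have hdvd : r ∣ p := by
      have h1 : r ∣ (p ^ k) ^ 2 := by
        rw [← hF, hn]
        exact dvd_pow_self r n.ne_zero
      exact hrp.dvd_of_dvd_pow (hrp.dvd_of_dvd_pow h1)
    have hrp2 : r = p := (Nat.prime_dvd_prime_iff_eq hrp hp').1 hdvd
    subst hrp2
    exact ⟨iterateFrobenius F r k, fun x => iterateFrobenius_def r k x⟩
  obtain ⟨σ, hσ⟩ := hσ
  have hσσ : ∀ x, σ (σ x) = x := fun x => by
    rw [hσ, hσ, ← pow_mul, ← sq, ← hF, FiniteField.pow_card]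
  have h2 : (2 : F) ≠ 0 := by
    intro h
    have h1 : ringChar F = 2 := by
      have := ringChar.dvd (R := F) (x := 2) (by exact_mod_cast h)
      rcases (Nat.dvd_prime Nat.prime_two).1 this with h3 | h3
      · exact absurd h3 (CharP.ringChar_ne_one)
      · exact h3
    have h3 := FiniteField.even_card_of_char_two h1
    rw [hF] at h3
    have h4 : Odd (q ^ 2) := hodd.pow
    rw [Nat.odd_iff] at h4
    omega
  have hpow : ∀ x : F, x ^ (q + 1) = σ x * x := fun x => by rw [hσ, pow_succ]
  have hd' : σ d = d := by rw [hσ, hdq]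
  rw [← hσ] at hx₀
  simp only [hpow, ← hσ]
  have he : σ c ≠ 0 := by simpa using hc
  have hy : σ c * σ x₀ ^ 2 + d * σ x₀ + c = 0 := by
    have := congrArg σ hx₀
    simpa [hd', hσσ] using this
  have hx : x₀ ≠ 0 := by
    rintro rfl
    simp at hx₀
    exact hc hx₀
  generalize hwd : 2 * c * x₀ + d = w
  have hw : w ^ 2 = d ^ 2 - 4 * (σ c * c) := by
    rw [← hwd]; linear_combination 4 * c * hx₀
  have hσw : σ w = 2 * σ c * σ x₀ + d := by
    rw [← hwd, map_add, map_mul, map_mul, hd', map_ofNat]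
  have hpm : σ w = w ∨ σ w = - w := by
    apply sq_eq_sq_iff_eq_or_eq_neg.1
    rw [hσw, hw]; linear_combination 4 * σ c * hy
  have key : σ x₀ * x₀ = 1 ↔ σ w = -w := by
    rw [hσw, ← hwd]
    constructor
    · intro h
      apply mul_right_cancel₀ hx
      linear_combination 2 * σ c * h + 2 * hx₀
    · intro h
      apply mul_left_cancel₀ (mul_ne_zero h2 he)
      linear_combination x₀ * h - 2 * hx₀
  rw [key, ← hw]
  constructor
  · intro h
    by_cases h0 : w = 0
    · left; simp [h0]
    · right
      rintro ⟨z, hz, hzw⟩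
      have hfix : σ w = w := by
        rcases sq_eq_sq_iff_eq_or_eq_neg.1 hzw with rfl | rfl
        · exact hz
        · simpa using hz
      apply h0
      apply mul_left_cancel₀ h2
      linear_combination h - hfix
  · rintro (h | h)
    · have : w = 0 := by simpa using h
      simp [this]
    · rcases hpm with h1 | h1
      · exact absurd ⟨w, h1, rfl⟩ h
      · exact h1
end

section
/- Let s, t, r ∈ F with s ≠ 0, s^{q+1} ≠ 1, t ≠ 0, t^{2(q−1)} ≠ 1, and r ≠ 0. If a, b ∈ F are such that f_{a,b} = L_{t,s} ∘ f_{r,0} or f_{a,b} = L_{t,s} ∘ f_{0,r}, then a ≠ 0 and b ≠ 0. -/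
/-- Let `q` be a prime power and `F` a finite field with `q^2` elements.
Let `s, t, r ∈ F` with `s ≠ 0`, `s^(q+1) ≠ 1`, `t ≠ 0`, `t^(2(q-1)) ≠ 1`, `r ≠ 0`.
If `a, b ∈ F` are such that `f_{a,b} = L_{t,s} ∘ f_{r,0}` or
`f_{a,b} = L_{t,s} ∘ f_{0,r}`, then `a ≠ 0` and `b ≠ 0`. -/
theorem coeffs_nonzero (q : ℕ) (hq : IsPrimePow q) (F : Type*) [Field F] [Fintype F]
    (hF : Fintype.card F = q ^ 2) (s t r : F) (hs0 : s ≠ 0) (hs : s ^ (q + 1) ≠ 1)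
    (ht0 : t ≠ 0) (ht : t ^ (2 * (q - 1)) ≠ 1) (hr : r ≠ 0) (a b : F)
    (hab :
      (∀ x : F, a * x + b * x ^ q =
        ((t * s ^ (q + 1) - t ^ q) / (s ^ (q + 1) - 1)) * (r * x) +
        ((t - t ^ q) * s ^ q / (s ^ (q + 1) - 1)) * (r * x) ^ q) ∨
      (∀ x : F, a * x + b * x ^ q =
        ((t * s ^ (q + 1) - t ^ q) / (s ^ (q + 1) - 1)) * (r * x ^ q) +
        ((t - t ^ q) * s ^ q / (s ^ (q + 1) - 1)) * (r * x ^ q) ^ q)) :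
    a ≠ 0 ∧ b ≠ 0 := by
  have hq1 : 1 ≤ q := hq.pos
  have hfr : ∀ x : F, (x ^ q) ^ q = x := by
    intro x
    rw [← pow_mul, ← sq, ← hF, FiniteField.pow_card]
  have htm : t ^ q = t ^ (q - 1) * t := by
    rw [← pow_succ, Nat.sub_add_cancel hq1]
  have htq : t - t ^ q ≠ 0 := by
    intro h
    apply ht
    have h1 : t ^ (q - 1) = 1 := by
      apply mul_right_cancel₀ ht0
      rw [← htm, one_mul]
      exact (sub_eq_zero.mp h).symm
    rw [mul_comm, pow_mul, h1, one_pow]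
  have hA0 : t * s ^ (q + 1) - t ^ q ≠ 0 := by
    intro h
    apply ht
    have h1 : t ^ (q - 1) = s ^ (q + 1) := by
      apply mul_right_cancel₀ ht0
      rw [← htm, mul_comm (s ^ (q + 1)) t]
      exact (sub_eq_zero.mp h).symm
    have h2 : (s ^ (q + 1)) ^ q = s ^ (q + 1) := by
      rw [pow_succ, mul_pow, hfr, mul_comm]
    have h3 : t = s ^ (q + 1) * (s ^ (q + 1) * t) := by
      calc t = (t ^ q) ^ q := (hfr t).symm
        _ = (s ^ (q + 1) * t) ^ q := by rw [htm, h1]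
        _ = s ^ (q + 1) * t ^ q := by rw [mul_pow, h2]
        _ = _ := by rw [htm, h1]
    rw [mul_comm, pow_mul, h1]
    apply mul_right_cancel₀ ht0
    rw [sq, mul_assoc, ← h3, one_mul]
  have hd : s ^ (q + 1) - 1 ≠ 0 := sub_ne_zero.mpr hs
  have hA := div_ne_zero hA0 hd
  have hB := div_ne_zero (mul_ne_zero htq (pow_ne_zero q hs0)) hd
  generalize (t * s ^ (q + 1) - t ^ q) / (s ^ (q + 1) - 1) = A at hab hA
  generalize (t - t ^ q) * s ^ q / (s ^ (q + 1) - 1) = B at hab hB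
  have huniq : ∀ c d : F, (∀ x : F, a * x + b * x ^ q = c * x + d * x ^ q) → a = c ∧ b = d := by
    intro c d h
    have h1 := h 1
    simp only [one_pow, mul_one] at h1
    have h2 := h t
    have h3 : (a - c) * (t - t ^ q) = 0 := by linear_combination h2 - t ^ q * h1
    have h4 : a = c := sub_eq_zero.mp ((mul_eq_zero.mp h3).resolve_right htq)
    exact ⟨h4, by rw [h4] at h1; exact add_left_cancel h1⟩
  have hrq := pow_ne_zero q hr
  rcases hab with h | h
  · obtain ⟨h1, h2⟩ := huniq (A * r) (B * r ^ q) (by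
      intro x
      rw [h x, mul_pow]; ring)
    rw [h1, h2]
    exact ⟨mul_ne_zero hA hr, mul_ne_zero hB hrq⟩
  · obtain ⟨h1, h2⟩ := huniq (B * r ^ q) (A * r) (by
      intro x
      rw [h x, mul_pow, hfr]; ring)
    rw [h1, h2]
    exact ⟨mul_ne_zero hB hrq, mul_ne_zero hA hr⟩
end

section
/- Let s, t, r ∈ F with s ≠ 0, s^{q+1} ≠ 1, and r ≠ 0, and suppose a, b ∈ F satisfy a = (t·s^{q+1} − t^q)·r/(s^{q+1} − 1) and b = (t − t^q)·s^q·r^q/(s^{q+1} − 1). Then s is a root of the quadratic equation b·r·X² + (a^q·r − a·r^q)·X − (b·r)^q = 0. -/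
/-- Let `q` be a prime power and `F` a finite field with `q^2` elements.
Let `s, t, r ∈ F` with `s ≠ 0`, `s^(q+1) ≠ 1`, `r ≠ 0`, and suppose `a, b ∈ F` satisfy
`a = (t·s^(q+1) − t^q)·r/(s^(q+1) − 1)` and `b = (t − t^q)·s^q·r^q/(s^(q+1) − 1)`.
Then `s` is a root of `b·r·X² + (a^q·r − a·r^q)·X − (b·r)^q = 0`. -/
theorem s_is_root_of_quadratic (q : ℕ) (hq : IsPrimePow q) (F : Type*) [Field F] [Fintype F]
    (hF : Fintype.card F = q ^ 2) (s t r : F) (hs0 : s ≠ 0) (hs : s ^ (q + 1) ≠ 1)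
    (hr : r ≠ 0) (a b : F)
    (hA : a = (t * s ^ (q + 1) - t ^ q) * r / (s ^ (q + 1) - 1))
    (hB : b = (t - t ^ q) * s ^ q * r ^ q / (s ^ (q + 1) - 1)) :
    b * r * s ^ 2 + (a ^ q * r - a * r ^ q) * s - (b * r) ^ q = 0 := by
  have hsub : ∀ x y : F, (x - y) ^ q = x ^ q - y ^ q := by
    obtain ⟨p, k, hp, hk, rfl⟩ := hq
    have hp' : p.Prime := hp.nat_prime
    have : Fact p.Prime := ⟨hp'⟩
    have h0 : (p : F) = 0 := by
      have h := Nat.cast_card_eq_zero F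
      rw [hF] at h
      push_cast at h
      exact eq_zero_of_pow_eq_zero (eq_zero_of_pow_eq_zero h)
    have : CharP F p := (CharP.charP_iff_prime_eq_zero hp').2 h0
    intro x y
    exact sub_pow_char_pow (p := p) ..
  have hqq : ∀ x : F, (x ^ q) ^ q = x := by
    intro x
    rw [← pow_mul, ← pow_two, ← hF, FiniteField.pow_card]
  have hN : s ^ q * s - 1 ≠ 0 := by
    rw [← pow_succ]
    exact sub_ne_zero.2 hs
  have hN' : s * s ^ q - 1 ≠ 0 := by rwa [mul_comm]
  subst hA hB
  simp only [pow_succ s q, mul_pow, div_pow, hsub, hqq, one_pow]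
  generalize s ^ q = S at *
  generalize t ^ q = T at *
  generalize r ^ q = R at *
  rw [mul_comm S s]
  field_simp
  ring
end

section
/- Let a, b, r ∈ F be nonzero. Then the quadratic equation b·r·X² + (a^q·r − a·r^q)·X − (b·r)^q = 0 has a root in F, and every root of this equation lying in F is nonzero. -/
/-- Let `q` be a prime power and `F` a finite field with `q^2` elements, and let
`a, b, r ∈ F` be nonzero.  Then the quadratic `b·r·X² + (a^q·r − a·r^q)·X − (b·r)^q = 0`
has a root in `F`, and every root of this equation lying in `F` is nonzero. -/
theorem quadratic_has_root (q : ℕ) (hq : IsPrimePow q) (F : Type*) [Field F] [Fintype F]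
    (hF : Fintype.card F = q ^ 2) (a b r : F) (ha : a ≠ 0) (hb : b ≠ 0) (hr : r ≠ 0) :
    (∃ s : F, b * r * s ^ 2 + (a ^ q * r - a * r ^ q) * s - (b * r) ^ q = 0) ∧
    ∀ s : F, b * r * s ^ 2 + (a ^ q * r - a * r ^ q) * s - (b * r) ^ q = 0 → s ≠ 0 := by
  have hc : b * r ≠ 0 := mul_ne_zero hb hr
  have hq0 : q ≠ 0 := hq.pos.ne'
  refine ⟨?_, ?_⟩
  swap
  · rintro s hs rfl
    apply pow_ne_zero q hc
    simpa using hs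
  obtain ⟨p, k, hp, hk, rfl⟩ := hq
  have hpn : p.Prime := hp.nat_prime
  have : Fact p.Prime := ⟨hpn⟩
  obtain ⟨ell, hchar⟩ := CharP.exists F
  obtain ⟨n, hell, hn⟩ := FiniteField.card F ell
  have hpp : ell = p := by
    have h1 : ell ∣ (p ^ k) ^ 2 := by
      rw [← hF, hn]; exact dvd_pow_self _ n.ne_zero
    exact (Nat.prime_dvd_prime_iff_eq hell hpn).1
      (hell.dvd_of_dvd_pow (hell.dvd_of_dvd_pow h1))
  subst hpp
  let K := AlgebraicClosure F
  have : CharP K ell := charP_of_injective_algebraMap (algebraMap F K).injective ell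
  have hadd : ∀ x y : K, (x + y) ^ ell ^ k = x ^ ell ^ k + y ^ ell ^ k :=
    fun x y => add_pow_char_pow x y ell k
  have hsub : ∀ x y : K, (x - y) ^ ell ^ k = x ^ ell ^ k - y ^ ell ^ k :=
    fun x y => sub_pow_char_pow x y k
  generalize ell ^ k = q at *
  have hneg : ∀ x : K, (-x) ^ q = -(x ^ q) := by
    intro x
    have := hsub 0 x
    simpa [hq0] using this
  have hfix : ∀ x : F, ((algebraMap F K x) ^ q) ^ q = algebraMap F K x := by
    intro x
    rw [← pow_mul, ← pow_two, ← hF, ← map_pow, FiniteField.pow_card]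
  set A := algebraMap F K a with hA
  set R := algebraMap F K r with hR
  set C := algebraMap F K (b * r) with hC
  have hA2 := hfix a
  have hR2 := hfix r
  have hC2 := hfix (b * r)
  have hC0 : C ≠ 0 := by simpa [hC] using hc
  rw [← hA] at hA2
  rw [← hR] at hR2
  rw [← hC] at hC2
  set D := A ^ q * R - A * R ^ q with hD
  have hDq : D ^ q = -D := by
    rw [hD, hsub, mul_pow, mul_pow, hA2, hR2]; ring
  obtain ⟨y, hy⟩ : ∃ y : K, y ^ 2 + D * y - C * C ^ q = 0 := by
    obtain ⟨y, hy⟩ := IsAlgClosed.exists_root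
      (Polynomial.C (1 : K) * Polynomial.X ^ 2 + Polynomial.C D * Polynomial.X
        + Polynomial.C (-(C * C ^ q)))
      (by rw [Polynomial.degree_quadratic one_ne_zero]; norm_num)
    refine ⟨y, ?_⟩
    simp [Polynomial.IsRoot] at hy
    linear_combination hy
  have hyq : (y ^ q) ^ 2 - D * y ^ q - C * C ^ q = 0 := by
    have h := congrArg (· ^ q) hy
    simp only [hsub, hadd, mul_pow, hDq, hC2, zero_pow hq0] at h
    rw [← pow_mul, mul_comm 2 q, pow_mul] at h
    linear_combination h
  have hyy : (y ^ q) ^ q = y := by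
    have : (y ^ q + y) * (y ^ q - (y + D)) = 0 := by linear_combination hyq - hy
    rcases mul_eq_zero.1 this with h | h
    · have h1 : y ^ q = -y := by linear_combination h
      rw [h1, hneg, h1, neg_neg]
    · have h1 : y ^ q = y + D := by linear_combination h
      rw [h1, hadd, h1, hDq]; ring
  obtain ⟨z, hz⟩ : ∃ z : F, algebraMap F K z = y := by
    have hs : (Polynomial.X ^ Fintype.card F - Polynomial.X : Polynomial F).Splits := by
      simpa using (FiniteField.isSplittingField_sub F F).splits
    have h1 := hs.roots_map (algebraMap F K)
    rw [FiniteField.roots_X_pow_card_sub_X] at h1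
    have h0 : (Polynomial.X ^ Fintype.card F - Polynomial.X : Polynomial F) ≠ 0 :=
      FiniteField.X_pow_card_sub_X_ne_zero F Fintype.one_lt_card
    have h2 : y ∈ ((Polynomial.X ^ Fintype.card F - Polynomial.X : Polynomial F).map
        (algebraMap F K)).roots := by
      rw [Polynomial.mem_roots (Polynomial.map_ne_zero h0)]
      simp [Polynomial.IsRoot, hF, pow_two, pow_mul, hyy]
    rw [h1] at h2
    simpa using h2
  have hzF : z ^ 2 + (a ^ q * r - a * r ^ q) * z - (b * r) * (b * r) ^ q = 0 := by
    apply (algebraMap F K).injective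
    have hCb : C = algebraMap F K b * R := by rw [hC, map_mul]
    simp only [map_sub, map_add, map_mul, map_pow, map_zero, hz]
    rw [← hA, ← hR, ← hCb, ← hy, hD]
  refine ⟨z / (b * r), ?_⟩
  have e : b * r * (z / (b * r)) = z := by field_simp
  apply mul_left_cancel₀ hc
  generalize z / (b * r) = w at *
  subst e
  linear_combination hzF
end

section
/- Let a, b, r ∈ F be nonzero and let s ∈ F with s^{q+1} ≠ 1 be a root of b·r·X² + (a^q·r − a·r^q)·X − (b·r)^q = 0 (in particular s ≠ 0). Then s^{-q} is also a root of this equation, s + s^{-q} = −b^{-1}·a^q + b^{-1}·a·r^{q−1}, and s^{1−q} = −(b·r)^{q−1}. -/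
/-- Let `q` be a prime power and `F` a finite field with `q^2` elements, let
`a, b, r ∈ F` be nonzero and let `s ∈ F` with `s^(q+1) ≠ 1` be a root of
`b·r·X² + (a^q·r − a·r^q)·X − (b·r)^q = 0` (in particular `s ≠ 0`).  Then `s^{-q}` is
also a root, `s + s^{-q} = −b⁻¹·a^q + b⁻¹·a·r^(q−1)`, and `s^(1−q) = −(b·r)^(q−1)`. -/
theorem other_root_and_viete (q : ℕ) (hq : IsPrimePow q) (F : Type*) [Field F] [Fintype F]
    (hF : Fintype.card F = q ^ 2) (a b r : F) (ha : a ≠ 0) (hb : b ≠ 0) (hr : r ≠ 0)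
    (s : F) (hs : s ^ (q + 1) ≠ 1)
    (hroot : b * r * s ^ 2 + (a ^ q * r - a * r ^ q) * s - (b * r) ^ q = 0) :
    s ≠ 0 ∧
    b * r * ((s ^ q)⁻¹) ^ 2 + (a ^ q * r - a * r ^ q) * (s ^ q)⁻¹ - (b * r) ^ q = 0 ∧
    s + (s ^ q)⁻¹ = -b⁻¹ * a ^ q + b⁻¹ * a * r ^ (q - 1) ∧
    s * (s ^ q)⁻¹ = -(b * r) ^ (q - 1) := by
  obtain ⟨p, k, hp, hk, rfl⟩ := hq
  have hp' : p.Prime := hp.nat_prime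
  have hp0 : (p : F) = 0 := by
    have h : ((Fintype.card F : ℕ) : F) = 0 := Nat.cast_card_eq_zero F
    rw [hF] at h
    push_cast at h
    exact eq_zero_of_pow_eq_zero (eq_zero_of_pow_eq_zero h)
  obtain ⟨c, hc⟩ := CharP.exists F
  have hcp : c = p := by
    have h1 : c ∣ p := (CharP.cast_eq_zero_iff F c p).1 hp0
    rcases (Nat.dvd_prime hp').1 h1 with h | h
    · exact absurd h (CharP.char_ne_one F c)
    · exact h
  subst hcp
  have : Fact c.Prime := ⟨hp'⟩
  have hadd : ∀ x y : F, (x + y) ^ (c ^ k) = x ^ (c ^ k) + y ^ (c ^ k) :=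
    fun x y => add_pow_char_pow x y c k
  have hsub : ∀ x y : F, (x - y) ^ (c ^ k) = x ^ (c ^ k) - y ^ (c ^ k) :=
    fun x y => sub_pow_char_pow x y k
  have hq0 : c ^ k ≠ 0 := pow_ne_zero _ hp'.ne_zero
  generalize c ^ k = q at *
  have hfr : ∀ x : F, (x ^ q) ^ q = x := by
    intro x
    rw [← pow_mul, ← sq, ← hF, FiniteField.pow_card]
  have hs0 : s ≠ 0 := by
    rintro rfl
    have h : (b * r) ^ q = 0 := by linear_combination -hroot
    exact mul_ne_zero hb hr (eq_zero_of_pow_eq_zero h)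
  have hroot2 := congrArg (· ^ q) hroot
  simp only [hsub, hadd, mul_pow, hfr, zero_pow hq0] at hroot2
  rw [← pow_mul s, mul_comm 2 q, pow_mul] at hroot2
  rw [mul_pow] at hroot ⊢
  obtain ⟨m, rfl⟩ := Nat.exists_eq_succ_of_ne_zero hq0
  simp only [Nat.succ_eq_add_one, Nat.add_sub_cancel] at *
  have hS0 : s ^ (m + 1) ≠ 0 := pow_ne_zero _ hs0
  rw [pow_succ s (m + 1)] at hs
  rw [mul_pow b r m]
  rw [pow_succ r m, pow_succ b m] at *
  generalize s ^ (m + 1) = S at *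
  generalize a ^ (m + 1) = A at *
  generalize r ^ m = R at *
  generalize b ^ m = B at *
  have hne : S * s - 1 ≠ 0 := sub_ne_zero.2 hs
  have hsum : b * (s * S + 1) + (A - a * R) * S = 0 := by
    have h : (S * s - 1) * r * (b * (s * S + 1) + (A - a * R) * S) = 0 := by
      linear_combination S ^ 2 * hroot + hroot2
    exact (mul_eq_zero.1 h).resolve_left (mul_ne_zero hne hr)
  have hprod : s + B * R * S = 0 := by
    have h : b * r * (s + B * R * S) = 0 := by
      linear_combination r * s * hsum - S * hroot
    exact (mul_eq_zero.1 h).resolve_left (mul_ne_zero hb hr)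
  refine ⟨hs0, ?_, ?_, ?_⟩
  · field_simp
    linear_combination -hroot2
  · field_simp
    linear_combination hsum
  · field_simp
    linear_combination hprod
end

section
/- Let s, t, r ∈ F with s ≠ 0, s^{q+1} ≠ 1, t ≠ 0, r ≠ 0, and set a = (t·s^{q+1} − t^q)·r/(s^{q+1} − 1) and b = (t − t^q)·s^q·r^q/(s^{q+1} − 1); assume a ≠ 0 and b ≠ 0. If q is even, then t^{2(q−1)} ≠ 1. If q is odd, then t^{2(q−1)} ≠ 1 if and only if r^{q−1} + a^{q−1} ≠ 0. -/
/-- Let `q` be a prime power and `F` a finite field with `q^2` elements.  Let `s, t, r ∈ F`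
with `s ≠ 0`, `s^(q+1) ≠ 1`, `t ≠ 0`, `r ≠ 0`, and set
`a = (t·s^(q+1) − t^q)·r/(s^(q+1) − 1)`, `b = (t − t^q)·s^q·r^q/(s^(q+1) − 1)`; assume
`a ≠ 0` and `b ≠ 0`.  If `q` is even then `t^(2(q−1)) ≠ 1`; if `q` is odd then
`t^(2(q−1)) ≠ 1 ↔ r^(q−1) + a^(q−1) ≠ 0`. -/
theorem t_in_T_criterion (q : ℕ) (hq : IsPrimePow q) (F : Type*) [Field F] [Fintype F]
    (hF : Fintype.card F = q ^ 2) (s t r : F) (hs0 : s ≠ 0) (hs : s ^ (q + 1) ≠ 1)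
    (ht : t ≠ 0) (hr : r ≠ 0) (a b : F)
    (hA : a = (t * s ^ (q + 1) - t ^ q) * r / (s ^ (q + 1) - 1))
    (hB : b = (t - t ^ q) * s ^ q * r ^ q / (s ^ (q + 1) - 1))
    (ha : a ≠ 0) (hb : b ≠ 0) :
    (Even q → t ^ (2 * (q - 1)) ≠ 1) ∧
    (Odd q → (t ^ (2 * (q - 1)) ≠ 1 ↔ r ^ (q - 1) + a ^ (q - 1) ≠ 0)) := by
  obtain ⟨p, k, hp, hk, rfl⟩ := hq
  have hp' : p.Prime := hp.nat_prime
  have : Fact p.Prime := ⟨hp'⟩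
  have hchar : CharP F p := by
    obtain ⟨p', hc⟩ := CharP.exists F
    obtain ⟨n, hpp, hn⟩ := FiniteField.card F p'
    have h1 : p' ∣ (p ^ k) ^ 2 := by
      rw [← hF, hn]
      exact dvd_pow_self _ n.pos.ne'
    have h2 : p' ∣ p := hpp.dvd_of_dvd_pow (hpp.dvd_of_dvd_pow h1)
    have h3 : p' = p := (Nat.prime_dvd_prime_iff_eq hpp hp').1 h2
    exact h3 ▸ hc
  have hsub : ∀ x y : F, (x - y) ^ (p ^ k) = x ^ (p ^ k) - y ^ (p ^ k) :=
    fun x y => sub_pow_char_pow x y k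
  have hpk : p ^ k ≠ 0 := pow_ne_zero _ hp'.ne_zero
  have hinv : ∀ x : F, (x ^ (p ^ k)) ^ (p ^ k) = x := by
    intro x
    rw [← pow_mul, ← sq, ← hF, FiniteField.pow_card]
  have heven : Even (p ^ k) → (2 : F) = 0 := by
    intro he
    have h2 : 2 ∣ p := Nat.prime_two.dvd_of_dvd_pow he.two_dvd
    have h3 : 2 = p := (Nat.prime_dvd_prime_iff_eq Nat.prime_two hp').1 h2
    have := CharP.cast_eq_zero F p
    rw [← h3] at this
    exact_mod_cast this
  generalize p ^ k = q at *
  have hS : (s ^ (q + 1)) ^ q = s ^ (q + 1) := by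
    rw [pow_succ, mul_pow, hinv, mul_comm]
  generalize s ^ (q + 1) = S at *
  have hS1 : S - 1 ≠ 0 := sub_ne_zero.2 hs
  have hut : t - t ^ q ≠ 0 := by
    intro h
    apply hb
    rw [hB, h]
    simp
  have key : ∀ x : F, x ^ (q - 1) * x = x ^ q := fun x => pow_sub_one_mul hpk x
  have hiff : t ^ (2 * (q - 1)) = 1 ↔ t ^ q + t = 0 := by
    have h1 : t ^ (2 * (q - 1)) * t ^ 2 = (t ^ q) ^ 2 := by
      rw [← key t]; ring
    constructor
    · intro h
      rw [h] at h1
      have : (t - t ^ q) * (t ^ q + t) = 0 := by linear_combination h1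
      exact (mul_eq_zero.1 this).resolve_left hut
    · intro h
      apply mul_right_cancel₀ (pow_ne_zero 2 ht)
      rw [h1]
      linear_combination (t ^ q - t) * h
  constructor
  · intro he h
    have := hiff.1 h
    exact hut (by linear_combination t * heven he - this)
  · intro _
    rw [ne_eq, ne_eq, hiff, not_iff_not]
    obtain ⟨c, hc⟩ : ∃ c, c = (t * S - t ^ q) / (S - 1) := ⟨_, rfl⟩
    have hac : a = c * r := by rw [hA, hc]; ring
    have hc0 : c ≠ 0 := by
      rintro rfl
      exact ha (by simp [hac])
    have hcq : c ^ q + c = t ^ q + t := by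
      rw [hc, div_pow, hsub, hsub, mul_pow, hinv, hS, one_pow]
      field_simp
      ring
    have hprod : (r ^ (q - 1) + a ^ (q - 1)) * c = r ^ (q - 1) * (t ^ q + t) := by
      rw [← hcq, ← key c, hac, mul_pow]
      ring
    constructor
    · intro h
      rw [h, mul_zero] at hprod
      exact (mul_eq_zero.1 hprod).resolve_right hc0
    · intro h
      rw [h, zero_mul] at hprod
      exact (mul_eq_zero.1 hprod.symm).resolve_left (pow_ne_zero _ hr)
end

section
/- Suppose q is odd. Let a, b ∈ F be nonzero with a^{q+1} ≠ b^{q+1}, and let R₂ = {r ∈ F : r ≠ 0 and there exists s ∈ F with s^{q+1} ≠ 1 and b·r·s² + (a^q·r − a·r^q)·s − (b·r)^q = 0}. Set κ = 1 − a^{q+1}/b^{q+1} (an element of the subfield 𝔽_q). If there is no z ∈ F with z^q = z and z² = κ, then |R₂| = (q−1)²/2; if there exists z ∈ F with z^q = z, z ≠ 0 and z² = κ, then |R₂| = (q²−1)/2. -/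
/-- The map `x ↦ x ^ q` as a ring homomorphism. -/
theorem exists_frob (q : ℕ) (hq : IsPrimePow q)
    (F : Type*) [Field F] [Fintype F] (hF : Fintype.card F = q ^ 2) :
    ∃ σ : F →+* F, (∀ x, σ x = x ^ q) ∧ (∀ x, σ (σ x) = x) := by
  obtain ⟨p, k, hp, hk, rfl⟩ := hq
  have hp' : p.Prime := hp.nat_prime
  have : Fact p.Prime := ⟨hp'⟩
  have : CharP F p := by
    apply charP_of_card_eq_prime_pow (f := k * 2)
    rw [hF, pow_mul]
  refine ⟨iterateFrobenius F p k, fun x => iterateFrobenius_def p k x, fun x => ?_⟩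
  rw [iterateFrobenius_def, iterateFrobenius_def, ← pow_mul, ← sq, ← hF, FiniteField.pow_card]

theorem card_pow_one (F : Type*) [Field F] [Fintype F] (n N : ℕ) (hN : Fintype.card F - 1 = n * N) :
    Set.ncard {t : F | t ^ n = 1} = n := by
  classical
  have hpos : 0 < Fintype.card F - 1 := by
    have := Fintype.one_lt_card (α := F); omega
  have hn : 0 < n := by
    rcases Nat.eq_zero_or_pos n with h | h
    · subst h; omega
    · exact h
  obtain ⟨g, hg⟩ := IsCyclic.exists_generator (α := Fˣ)
  have ho : orderOf g = Fintype.card F - 1 := by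
    rw [orderOf_eq_card_of_forall_mem_zpowers hg, Nat.card_eq_fintype_card, Fintype.card_units]
  have hprim : IsPrimitiveRoot (g : F) (n * N) := by
    rw [← hN, ← ho]
    exact (IsPrimitiveRoot.orderOf g).map_of_injective (f := Units.coeHom F) Units.val_injective
  have hprim' : IsPrimitiveRoot ((g : F) ^ N) n :=
    hprim.pow (by omega) (Nat.mul_comm _ _)
  have h := hprim'.card_nthRootsFinset
  refine Eq.trans ?_ h
  rw [← Set.ncard_coe_finset]
  congr 1
  ext t
  simp [Polynomial.mem_nthRootsFinset hn]

theorem card_pow_neg_one (F : Type*) [Field F] [Fintype F] (h2 : (2 : F) ≠ 0) (n N : ℕ)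
    (hN : Fintype.card F - 1 = 2 * n * N) :
    Set.ncard {t : F | t ^ n = -1} = n := by
  have h1 := card_pow_one F n (2 * N) (by rw [hN]; ring)
  have h3 := card_pow_one F (2 * n) N hN
  have hd : Disjoint {t : F | t ^ n = 1} {t : F | t ^ n = -1} := by
    rw [Set.disjoint_left]
    intro t ht ht'
    simp only [Set.mem_ofPred_eq] at ht ht'
    apply h2
    linear_combination ht' - ht
  have hu : {t : F | t ^ (2 * n) = 1} = {t : F | t ^ n = 1} ∪ {t : F | t ^ n = -1} := by
    ext t
    simp only [Set.mem_ofPred_eq, Set.mem_union]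
    rw [mul_comm, pow_mul, sq, mul_self_eq_one_iff]
  have := Set.ncard_union_eq hd (Set.toFinite _) (Set.toFinite _)
  rw [← hu] at this
  omega

section
variable {F : Type*} [Field F]

/-- Membership in `R₂` in terms of the discriminant. -/
theorem mem_iff (h : ℕ) (hh : 0 < h) [Fintype F] (hF : Fintype.card F = (2 * h + 1) ^ 2)
    (h2 : (2 : F) ≠ 0) (σ : F →+* F) (hσ : ∀ x, σ x = x ^ (2 * h + 1)) (hσσ : ∀ x, σ (σ x) = x)
    (a b r : F) (hb : b ≠ 0) :
    (r ≠ 0 ∧ ∃ s : F, s * σ s ≠ 1 ∧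
      b * r * s ^ 2 + (σ a * r - a * σ r) * s - σ (b * r) = 0) ↔
    ((σ a * r - a * σ r) ^ 2 + 4 * (b * r * σ (b * r))) ^ h = -1 := by
  set w := σ a * r - a * σ r with hw
  have hσw : σ w = - w := by simp only [hw, map_sub, map_mul, hσσ]; ring
  set c := b * r with hc
  have key : ∀ δ : F, δ ≠ 0 → (σ δ = - δ ↔ (δ ^ 2) ^ h = -1) := by
    intro δ hδ
    rw [hσ, pow_succ, pow_mul]
    constructor
    · intro H
      apply mul_right_cancel₀ hδ
      rw [H]; ring
    · intro H
      rw [H]; ring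
  constructor
  · rintro ⟨hr, s, hs, he⟩
    have hc0 : c ≠ 0 := mul_ne_zero hb hr
    have hsc0 : σ c ≠ 0 := (map_ne_zero σ).2 hc0
    set δ := 2 * c * s + w with hδ
    have hD : δ ^ 2 = w ^ 2 + 4 * (c * σ c) := by
      rw [hδ]; linear_combination 4 * c * he
    have h4 : σ δ ^ 2 = δ ^ 2 := by
      rw [hD, ← map_pow, hD]
      simp only [map_add, map_mul, map_pow, hσw, hσσ, map_ofNat]; ring
    have hsd : σ δ = 2 * σ c * σ s - w := by
      simp only [hδ, map_add, map_mul, hσw, map_ofNat]; ring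
    have hne : σ δ ≠ δ := by
      intro H
      apply hs
      have : 4 * (c * σ c) * (s * σ s - 1) = 0 := by
        have e1 : 2 * c * s = δ - w := by rw [hδ]; ring
        have e2 : 2 * σ c * σ s = δ + w := by rw [← H, hsd]; ring
        linear_combination (2 * σ c * σ s) * e1 + (δ - w) * e2 + hD
      have h44 : (4 : F) ≠ 0 := by
        have : (4 : F) = 2 * 2 := by norm_num
        rw [this]; exact mul_ne_zero h2 h2
      have := (mul_eq_zero.1 this).resolve_left (mul_ne_zero h44 (mul_ne_zero hc0 hsc0))
      linear_combination this
    have hδ0 : δ ≠ 0 := by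
      intro H; apply hne; rw [H, map_zero]
    rw [← hD]
    exact (key δ hδ0).1 ((sq_eq_sq_iff_eq_or_eq_neg.1 h4).resolve_left hne)
  · intro H
    have hr : r ≠ 0 := by
      rintro rfl
      have h0 : w ^ 2 + 4 * (c * σ c) = 0 := by simp [hw, hc]
      rw [h0, zero_pow hh.ne'] at H
      exact one_ne_zero (α := F) (by linear_combination H)
    have hc0 : c ≠ 0 := mul_ne_zero hb hr
    refine ⟨hr, ?_⟩
    set D := w ^ 2 + 4 * (c * σ c) with hDdef
    have hD0 : D ≠ 0 := by
      intro H0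
      rw [H0, zero_pow hh.ne'] at H
      exact one_ne_zero (α := F) (by linear_combination H)
    have hchar : ringChar F ≠ 2 := by
      intro hcc
      apply h2
      have := ringChar.Nat.cast_ringChar (R := F)
      rw [hcc] at this; exact_mod_cast this
    have hsq : IsSquare D := by
      rw [FiniteField.isSquare_iff hchar hD0]
      have : Fintype.card F / 2 = h * (2 * (h + 1)) := by
        rw [hF]
        have : (2 * h + 1) ^ 2 = 2 * (h * (2 * (h + 1))) + 1 := by ring
        omega
      rw [this, pow_mul, H, pow_mul]; simp
    obtain ⟨δ, hδ⟩ := hsq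
    rw [← sq] at hδ
    have hδ0 : δ ≠ 0 := by rintro rfl; apply hD0; rw [hδ]; ring
    have hsd : σ δ = - δ := (key δ hδ0).2 (by rw [← hδ, H])
    refine ⟨(δ - w) / (2 * c), ?_, ?_⟩
    · intro H1
      have hsc0 : σ c ≠ 0 := (map_ne_zero σ).2 hc0
      simp only [map_div₀, map_sub, map_mul, map_ofNat, hsd, hσw] at H1
      field_simp at H1
      have e : (2 * δ) * (δ - w) = 0 := by
        linear_combination -H1 - (hDdef.symm.trans hδ)
      rcases mul_eq_zero.1 e with e | e
      · exact mul_ne_zero h2 hδ0 e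
      · have : 4 * (c * σ c) = 0 := by
          linear_combination (hDdef.symm.trans hδ) + (δ + w) * e
        have h44 : (4 : F) ≠ 0 := by
          have : (4 : F) = 2 * 2 := by norm_num
          rw [this]; exact mul_ne_zero h2 h2
        exact mul_ne_zero h44 (mul_ne_zero hc0 hsc0) this
    · field_simp
      linear_combination -(hDdef.symm.trans hδ)

/-- Diagonalised discriminant. -/
theorem disc_eq (σ : F →+* F) (hσσ : ∀ x, σ (σ x) = x)
    (a b u z : F) (hb : b ≠ 0) (hz : z ^ 2 = 1 - a * σ a / (b * σ b)) :
    (σ a * (a * u) - a * σ (a * u)) ^ 2 + 4 * (b * (a * u) * σ (b * (a * u))) =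
      (a * b * σ (a * b)) * ((u + σ u + z * (u - σ u)) * (u + σ u - z * (u - σ u))) := by
  have hsb : σ b ≠ 0 := (map_ne_zero σ).2 hb
  field_simp at hz
  simp only [map_mul]
  linear_combination (a * σ a * (u - σ u) ^ 2) * hz
end

/-- Let `q` be an odd prime power and `F` a finite field with `q^2` elements.  Let
`a, b ∈ F` be nonzero with `a^(q+1) ≠ b^(q+1)`, and let
`R₂ = {r ≠ 0 : b·r·X² + (a^q·r − a·r^q)·X − (b·r)^q = 0 has a root s with s^(q+1) ≠ 1}`.
Set `κ = 1 − a^(q+1)/b^(q+1)`.  If `κ` is a nonsquare in `𝔽_q` then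
`|R₂| = (q−1)²/2`; if `κ` is a nonzero square in `𝔽_q` then `|R₂| = (q²−1)/2`. -/
theorem card_R2_odd (q : ℕ) (hq : IsPrimePow q) (hodd : Odd q)
    (F : Type*) [Field F] [Fintype F] (hF : Fintype.card F = q ^ 2)
    (a b : F) (ha : a ≠ 0) (hb : b ≠ 0) (hab : a ^ (q + 1) ≠ b ^ (q + 1)) :
    ((¬∃ z : F, z ^ q = z ∧ z ^ 2 = 1 - a ^ (q + 1) / b ^ (q + 1)) →
      Set.ncard {r : F | r ≠ 0 ∧ ∃ s : F, s ^ (q + 1) ≠ 1 ∧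
          b * r * s ^ 2 + (a ^ q * r - a * r ^ q) * s - (b * r) ^ q = 0} =
        (q - 1) ^ 2 / 2) ∧
    ((∃ z : F, z ^ q = z ∧ z ≠ 0 ∧ z ^ 2 = 1 - a ^ (q + 1) / b ^ (q + 1)) →
      Set.ncard {r : F | r ≠ 0 ∧ ∃ s : F, s ^ (q + 1) ≠ 1 ∧
          b * r * s ^ 2 + (a ^ q * r - a * r ^ q) * s - (b * r) ^ q = 0} =
        (q ^ 2 - 1) / 2) := by
  obtain ⟨σ, hσ, hσσ⟩ := exists_frob q hq F hF
  obtain ⟨h, rfl⟩ := hodd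
  have hh : 0 < h := by
    rcases Nat.eq_zero_or_pos h with h0 | h0
    · subst h0; exact absurd rfl hq.ne_one
    · exact h0
  have hchar : ringChar F ≠ 2 := by
    intro hc
    have := (FiniteField.even_card_iff_char_two (F := F)).1 hc
    rw [hF] at this
    have h3 : (2 * h + 1) ^ 2 = 2 * (h * (2 * (h + 1))) + 1 := by ring
    omega
  have h2 : (2 : F) ≠ 0 := Ring.two_ne_zero hchar
  have h44 : (4 : F) ≠ 0 := by
    have : (4 : F) = 2 * 2 := by norm_num
    rw [this]; exact mul_ne_zero h2 h2
  have hN : ∀ x : F, x ^ (2 * h + 1 + 1) = x * σ x := by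
    intro x; rw [hσ, pow_succ']
  have hset : {r : F | r ≠ 0 ∧ ∃ s : F, s ^ (2 * h + 1 + 1) ≠ 1 ∧
          b * r * s ^ 2 + (a ^ (2 * h + 1) * r - a * r ^ (2 * h + 1)) * s
            - (b * r) ^ (2 * h + 1) = 0} =
      {r : F | ((σ a * r - a * σ r) ^ 2 + 4 * (b * r * σ (b * r))) ^ h = -1} := by
    ext r
    simp only [hN, ← hσ, Set.mem_ofPred_eq]
    exact mem_iff h hh hF h2 σ hσ hσσ a b r hb
  rw [hset]
  simp only [hN] at hab ⊢
  simp only [← hσ]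
  have hsb : σ b ≠ 0 := (map_ne_zero σ).2 hb
  have hsa : σ a ≠ 0 := (map_ne_zero σ).2 ha
  set κ := 1 - a * σ a / (b * σ b) with hκ
  have hκ0 : κ ≠ 0 := by
    intro H
    apply hab
    rw [hκ] at H
    field_simp at H
    linear_combination -H
  have hcard : (2 * h + 1) ^ 2 = 2 * (h * (2 * (h + 1))) + 1 := by ring
  have hσκ : σ κ = κ := by
    simp only [hκ, map_sub, map_one, map_div₀, map_mul, hσσ]; ring
  constructor
  · intro hns
    have hsq : IsSquare κ := by
      rw [FiniteField.isSquare_iff hchar hκ0]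
      have : Fintype.card F / 2 = h * 2 * (h + 1) := by
        rw [hF, hcard]; have : h * (2 * (h + 1)) = h * 2 * (h + 1) := by ring
        omega
      rw [this, pow_mul]
      have e : κ ^ (h * 2) = 1 := by
        have := hσ κ
        rw [hσκ, pow_succ, mul_comm 2 h] at this
        apply mul_right_cancel₀ hκ0
        rw [← this, one_mul]
      rw [e, one_pow]
    obtain ⟨z, hz⟩ := hsq
    rw [← sq] at hz
    have hz0 : z ≠ 0 := by rintro rfl; apply hκ0; rw [hz]; ring
    have hσz : σ z = - z := by
      have : σ z ^ 2 = z ^ 2 := by rw [← map_pow, ← hz, hσκ]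
      refine (sq_eq_sq_iff_eq_or_eq_neg.1 this).resolve_left fun H => hns ⟨z, H, hz.symm⟩
    set c := a * b * σ (a * b) with hc
    have hc0 : c ≠ 0 := mul_ne_zero (mul_ne_zero ha hb) ((map_ne_zero σ).2 (mul_ne_zero ha hb))
    have hσc : σ c = c := by simp only [hc, map_mul, hσσ]; ring
    have hfix : ∀ x : F, x ≠ 0 → (σ x = x ↔ x ^ (2 * h) = 1) := by
      intro x hx
      rw [hσ, pow_succ]
      constructor
      · intro H; apply mul_right_cancel₀ hx; rw [H, one_mul]
      · intro H; rw [H, one_mul]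
    have hnz : ∀ x : F, x ^ h = -1 → x ≠ 0 := by
      rintro x hx rfl
      rw [zero_pow hh.ne'] at hx
      exact one_ne_zero (α := F) (by linear_combination hx)
    have hT : Set.ncard ({X : F | X ^ (2 * h) = 1} ×ˢ {n : F | n ^ h = -1}) = 2 * h * h := by
      rw [Set.ncard_prod, card_pow_one F (2 * h) (2 * (h + 1)) (by rw [hF, hcard]; simp; ring),
        card_pow_neg_one F h2 h (2 * (h + 1)) (by rw [hF, hcard]; simp; ring)]
    have hfin : (2 * h + 1 - 1) ^ 2 / 2 = 2 * h * h := by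
      have : (2 * h + 1 - 1) ^ 2 = 2 * (2 * h * h) := by simp; ring
      omega
    rw [hfin, ← hT]
    symm
    have hu : ∀ X Y : F, σ X = X → σ Y = Y → ∃ u, u + σ u + z * (u - σ u) = X ∧
        u + σ u - z * (u - σ u) = Y := by
      intro X Y hX hY
      refine ⟨(X + Y) / 4 + (X - Y) / (4 * z), ?_, ?_⟩
      all_goals
        simp only [map_add, map_sub, map_div₀, map_mul, hX, hY, hσz, map_ofNat]
        field_simp
        ring
    have hdisc : ∀ u, _ := fun u => disc_eq σ hσσ a b u z hb hz.symm
    have hbij : Set.BijOn (fun r : F => (r / a + σ (r / a) + z * (r / a - σ (r / a)),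
        (σ a * r - a * σ r) ^ 2 + 4 * (b * r * σ (b * r))))
        {r : F | ((σ a * r - a * σ r) ^ 2 + 4 * (b * r * σ (b * r))) ^ h = -1}
        ({X : F | X ^ (2 * h) = 1} ×ˢ {n : F | n ^ h = -1}) := by
      have har : ∀ r : F, r = a * (r / a) := fun r => by field_simp
      refine ⟨?_, ?_, ?_⟩
      · intro r hr
        simp only [Set.mem_ofPred_eq, Set.mem_prod] at hr ⊢
        refine ⟨?_, hr⟩
        have hd := hdisc (r / a)
        rw [← har r] at hd
        have h0 := hnz _ hr
        rw [hd] at h0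
        rw [← hfix _ (left_ne_zero_of_mul (right_ne_zero_of_mul h0))]
        simp only [map_add, map_sub, map_mul, hσσ, hσz]; ring
      · intro r hr r' hr' he
        simp only [Set.mem_ofPred_eq, Prod.mk.injEq] at hr hr' he
        obtain ⟨he1, he2⟩ := he
        have hd := hdisc (r / a)
        have hd' := hdisc (r' / a)
        rw [← har r] at hd
        rw [← har r'] at hd'
        have h0 := hnz _ hr
        rw [hd] at h0
        rw [hd, hd', ← he1] at he2
        have hX0 := (left_ne_zero_of_mul (right_ne_zero_of_mul h0))
        have he3 := mul_left_cancel₀ hX0 (mul_left_cancel₀ hc0 he2)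
        have e1 : 2 * (r / a + σ (r / a) - (r' / a + σ (r' / a))) = 0 := by
          linear_combination he1 + he3
        have e2 : 2 * z * (r / a - σ (r / a) - (r' / a - σ (r' / a))) = 0 := by
          linear_combination he1 - he3
        have e1' := (mul_eq_zero.1 e1).resolve_left h2
        have e2' := (mul_eq_zero.1 e2).resolve_left (mul_ne_zero h2 hz0)
        have e3 : 2 * (r / a - r' / a) = 0 := by linear_combination e1' + e2'
        have e3' := (mul_eq_zero.1 e3).resolve_left h2
        rw [har r, har r']
        linear_combination a * e3'
      · rintro ⟨X, n⟩ ⟨hX, hn⟩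
        simp only [Set.mem_ofPred_eq] at hX hn
        have hX0 : X ≠ 0 := by
          rintro rfl
          rw [zero_pow (by omega)] at hX
          exact zero_ne_one hX
        have hn0 := hnz n hn
        have hσX := (hfix X hX0).2 hX
        have hσn : σ n = n := (hfix n hn0).2 (by rw [mul_comm, pow_mul, hn]; ring)
        obtain ⟨u, hu1, hu2⟩ := hu X (n / (c * X)) hσX (by
          simp only [map_div₀, map_mul, hσX, hσn, hσc])
        have hd := hdisc u
        rw [hu1, hu2] at hd
        have hd' : (σ a * (a * u) - a * σ (a * u)) ^ 2
            + 4 * (b * (a * u) * σ (b * (a * u))) = n := by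
          rw [hd, ← hc]; field_simp
        refine ⟨a * u, ?_, ?_⟩
        · simp only [Set.mem_ofPred_eq]; rw [hd', hn]
        · have : a * u / a = u := by field_simp
          simp only [this, hu1, hd']
    rw [← hbij.image_eq]
    exact Set.ncard_image_of_injOn hbij.injOn
  · rintro ⟨z, hσz, hz0, hz⟩
    let f : F → F := fun r => a * b * (r / a + σ (r / a) + z * (r / a - σ (r / a)))
    have hf : Function.Injective f := by
      intro r r' he
      have he1 := mul_left_cancel₀ (mul_ne_zero ha hb) he
      have he2 := congrArg σ he1
      simp only [map_add, map_sub, map_mul, hσσ, hσz] at he2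
      have e1 : 2 * (r / a + σ (r / a) - (r' / a + σ (r' / a))) = 0 := by
        linear_combination he1 + he2
      have e2 : 2 * z * (r / a - σ (r / a) - (r' / a - σ (r' / a))) = 0 := by
        linear_combination he1 - he2
      have e1' := (mul_eq_zero.1 e1).resolve_left h2
      have e2' := (mul_eq_zero.1 e2).resolve_left (mul_ne_zero h2 hz0)
      have e3 : 2 * (r / a - r' / a) = 0 := by linear_combination e1' + e2'
      have e3' := (mul_eq_zero.1 e3).resolve_left h2
      have har : ∀ r : F, r = a * (r / a) := fun r => by field_simp
      rw [har r, har r']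
      linear_combination a * e3'
    have hpre : {r : F | ((σ a * r - a * σ r) ^ 2 + 4 * (b * r * σ (b * r))) ^ h = -1} =
        f ⁻¹' {t : F | t ^ (h * (2 * (h + 1))) = -1} := by
      ext r
      simp only [Set.mem_ofPred_eq, Set.mem_preimage]
      have hd := disc_eq σ hσσ a b (r / a) z hb hz
      have har : a * (r / a) = r := by field_simp
      rw [har] at hd
      have : f r ^ (h * (2 * (h + 1))) = (f r * σ (f r)) ^ h := by
        rw [← hN, ← pow_mul]; congr 1; ring
      rw [this, hd]
      have : a * b * σ (a * b) * ((r / a + σ (r / a) + z * (r / a - σ (r / a))) *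
          (r / a + σ (r / a) - z * (r / a - σ (r / a)))) = f r * σ (f r) := by
        simp only [f, map_add, map_sub, map_mul, hσσ, hσz]; ring
      rw [this]
    have hsurj := Finite.surjective_of_injective hf
    rw [hpre, Set.ncard_preimage_of_injective_subset_range hf (by rw [hsurj.range_eq]; simp),
      card_pow_neg_one F h2 (h * (2 * (h + 1))) 1 (by rw [hF, hcard]; simp), hcard]
    omega
end

section
/- Suppose q is even. Let a, b ∈ F be nonzero with a^{q+1} ≠ b^{q+1}, and let R₂ = {r ∈ F : r ≠ 0 and there exists s ∈ F with s^{q+1} ≠ 1 and b·r·s² + (a^q·r − a·r^q)·s − (b·r)^q = 0}. Then |R₂| = q(q−1)/2. -/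
/-- Artin-Schreier facts over a finite field of characteristic two. -/
theorem as_facts (K : Type*) [Field K] [Finite K] [CharP K 2] :
    ∃ H : AddSubgroup K, H.index = 2 ∧ ∀ y, y ∈ H ↔ ∃ t : K, t ^ 2 + t = y := by
  let g : K →+ K :=
    { toFun := fun t => t ^ 2 + t
      map_zero' := by simp
      map_add' := fun x y => by rw [CharTwo.add_sq]; ring }
  have hg : ∀ t, g t = t ^ 2 + t := fun _ => rfl
  refine ⟨g.range, ?_, fun y => by simp [AddMonoidHom.mem_range, hg]⟩
  have hker : Nat.card g.ker = 2 := by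
    have : (g.ker : Set K) = {0, 1} := by
      ext t
      simp only [SetLike.mem_coe, AddMonoidHom.mem_ker, hg, Set.mem_insert_iff,
        Set.mem_singleton_iff]
      constructor
      · intro h
        have : t * (t + 1) = 0 := by linear_combination h
        rcases mul_eq_zero.1 this with h | h
        · exact Or.inl h
        · exact Or.inr (CharTwo.add_eq_zero.1 h)
      · rintro (rfl | rfl)
        · simp
        · simp [CharTwo.add_self_eq_zero]
    have h2 : Nat.card (g.ker : Set K) = 2 := by
      rw [this, Nat.card_coe_set_eq, Set.ncard_pair zero_ne_one]
    exact h2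
  have h1 := g.range.card_mul_index
  have h2 := g.ker.card_mul_index
  rw [AddSubgroup.index_ker, hker] at h2
  have h3 : 0 < Nat.card g.range := Nat.card_pos
  have : Nat.card g.range * g.range.index = Nat.card g.range * 2 := by rw [h1, ← h2]; ring
  exact Nat.eq_of_mul_eq_mul_left h3 this

theorem mul_stable {K : Type*} [Field K] [Finite K] (H : AddSubgroup K) (m : K) (hm : m ≠ 0)
    (h : ∀ x ∈ H, m * x ∈ H) (y : K) (hy : m * y ∈ H) : y ∈ H := by
  have hinj : Function.Injective (fun x : H => (⟨m * x, h x x.2⟩ : H)) := by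
    intro x x' hx
    have : m * (x : K) = m * x' := congrArg Subtype.val hx
    exact Subtype.ext (mul_left_cancel₀ hm this)
  obtain ⟨x, hx⟩ := (Finite.surjective_of_injective hinj) ⟨m * y, hy⟩
  have : m * (x : K) = m * y := congrArg Subtype.val hx
  rw [← mul_left_cancel₀ hm this]
  exact x.2

theorem exists_not_mem {K : Type*} [Field K] [Finite K] [CharP K 2] (H : AddSubgroup K)
    (hH : H.index = 2) (k : K) (h0 : k ≠ 0) (h1 : k ≠ 1) : ∃ x ∈ H, k * x ∉ H := by
  by_contra! h
  have hne : H ≠ ⊤ := by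
    rintro rfl
    simp at hH
  obtain ⟨y, hy⟩ : ∃ y, y ∉ H := by
    by_contra! h'
    exact hne (eq_top_iff.2 fun x _ => h' x)
  have hky : k * y ∉ H := fun h' => hy (mul_stable H k h0 h y h')
  have hs : k * y + y ∈ H := by
    rw [AddSubgroup.add_mem_iff_of_index_two hH]
    tauto
  refine hy (mul_stable H (k + 1) (fun h => h1 (CharTwo.add_eq_zero.1 h)) ?_ y ?_)
  · intro x hx
    rw [add_mul, one_mul]
    exact H.add_mem (h x hx) hx
  · rwa [add_mul, one_mul]

theorem core {F : Type*} [Field F] [Fintype F] [CharP F 2] (φ : F →+* F)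
    (hφ : ∀ x, φ (φ x) = x) (q : ℕ) (hF : Fintype.card F = q ^ 2)
    (hK : Nat.card {x : F | φ x = x} ≤ q) :
    Set.ncard {x : F | φ x = x} = q ∧ ∃ z, φ z = z + 1 := by
  let f : F →+ F := φ.toAddMonoidHom + AddMonoidHom.id F
  have hf : ∀ x, f x = φ x + x := fun _ => rfl
  have hker : (f.ker : Set F) = {x : F | φ x = x} := by
    ext x
    simp [AddMonoidHom.mem_ker, hf, CharTwo.add_eq_zero]
  have hkc : Nat.card f.ker = Nat.card {x : F | φ x = x} := by rw [← hker]; rfl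
  have hle : f.range ≤ f.ker := by
    rintro _ ⟨x, rfl⟩
    rw [AddMonoidHom.mem_ker, hf, hf, map_add, hφ, add_comm (φ x), CharTwo.add_self_eq_zero]
  have hc := f.ker.card_mul_index
  rw [AddSubgroup.index_ker, Nat.card_eq_fintype_card (α := F), hF] at hc
  have hle2 : Nat.card f.range ≤ Nat.card f.ker := AddSubgroup.card_le_of_le hle
  rw [← hkc] at hK
  have e1 : Nat.card f.ker = q := by nlinarith
  refine ⟨by rw [← Nat.card_coe_set_eq, ← hkc, e1], ?_⟩
  have e2 : Nat.card f.range = Nat.card f.ker := by nlinarith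
  have e3 : f.range = f.ker := AddSubgroup.eq_of_le_of_card_ge hle e2.ge
  have : (1 : F) ∈ f.range := by
    rw [e3, AddMonoidHom.mem_ker, hf, map_one, CharTwo.add_self_eq_zero]
  obtain ⟨z, hz⟩ := this
  refine ⟨z, ?_⟩
  rw [hf] at hz
  rw [← hz, add_comm z, add_assoc, CharTwo.add_self_eq_zero, add_zero]

/-- The set of admissible z. -/
def ZZ {F : Type*} [Field F] (φ : F →+* F) (k : F) : Set F :=
  {z | φ z = z + 1 ∧ ∃ t, φ t = t ∧ t ^ 2 + t = k * (z ^ 2 + z)}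

theorem card_ZZ {F : Type*} [Field F] [Fintype F] [CharP F 2] (φ : F →+* F)
    (q : ℕ) (hK : Set.ncard {x : F | φ x = x} = q) (hz : ∃ z, φ z = z + 1)
    (k : F) (hk : φ k = k) (h0 : k ≠ 0) (h1 : k ≠ 1) : 2 * (ZZ φ k).ncard = q := by
  let K : Subfield F := φ.eqLocusField (RingHom.id F)
  have hmem : ∀ x, x ∈ K ↔ φ x = x := fun _ => Iff.rfl
  haveI : CharP K 2 := CharTwo.of_one_ne_zero_of_two_eq_zero one_ne_zero
    (Subtype.ext (by
      change ((2 : K) : F) = ((0 : K) : F)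
      push_cast
      exact CharTwo.two_eq_zero))
  obtain ⟨H, hH, hHt⟩ := as_facts K
  obtain ⟨y, hy, hky⟩ := exists_not_mem H hH ⟨k, hk⟩
    (fun h => h0 (congrArg Subtype.val h)) (fun h => h1 (congrArg Subtype.val h))
  obtain ⟨x0, hx0⟩ := (hHt y).1 hy
  have hx0' : φ x0 = x0 := x0.2
  have two : (2 : F) = 0 := CharTwo.two_eq_zero
  -- value in K
  have hval : ∀ z, φ z = z + 1 → k * (z ^ 2 + z) ∈ K := by
    intro z hz
    rw [hmem]
    simp only [map_mul, map_add, map_pow, hz, hk]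
    linear_combination k * (z + 1) * two
  have hZ : ∀ z (h : φ z = z + 1), z ∈ ZZ φ k ↔ (⟨_, hval z h⟩ : K) ∈ H := by
    intro z h
    rw [hHt]
    constructor
    · rintro ⟨_, t, ht, e⟩
      exact ⟨⟨t, ht⟩, Subtype.ext e⟩
    · rintro ⟨t, e⟩
      exact ⟨h, t, t.2, congrArg Subtype.val e⟩
  have hsh : ∀ z, φ z = z + 1 → φ (z + x0) = (z + x0) + 1 := by
    intro z h
    rw [map_add, h, hx0']; ring
  have hflip : ∀ z, φ z = z + 1 → (z + x0 ∈ ZZ φ k ↔ z ∉ ZZ φ k) := by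
    intro z h
    rw [hZ z h, hZ _ (hsh z h)]
    have : (⟨_, hval _ (hsh z h)⟩ : K) = ⟨_, hval z h⟩ + ⟨k, hk⟩ * y := by
      apply Subtype.ext
      rw [← hx0]
      push_cast
      linear_combination k * z * x0 * two
    rw [this, AddSubgroup.add_mem_iff_of_index_two hH]
    tauto
  have hdisj : Disjoint (ZZ φ k) ((fun z => z + (x0 : F)) '' ZZ φ k) := by
    rw [Set.disjoint_left]
    rintro _ h1 ⟨z, hz, rfl⟩
    exact (hflip z hz.1).1 h1 hz
  have hx00 : (x0 : F) + x0 = 0 := CharTwo.add_self_eq_zero _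
  have hun : ZZ φ k ∪ ((fun z => z + (x0 : F)) '' ZZ φ k) = {z | φ z = z + 1} := by
    ext z
    constructor
    · rintro (h | ⟨z, hz, rfl⟩)
      · exact h.1
      · exact hsh z hz.1
    · intro h
      by_cases hzz : z ∈ ZZ φ k
      · exact Or.inl hzz
      · exact Or.inr ⟨z + x0, (hflip z h).2 hzz, by simp [add_assoc, hx00]⟩
  obtain ⟨z0, hz0⟩ := hz
  have hC : {z | φ z = z + 1} = (fun z => z + z0) '' {x : F | φ x = x} := by
    ext z
    simp only [Set.mem_image, Set.mem_ofPred_eq]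
    constructor
    · intro h
      refine ⟨z - z0, ?_, by ring⟩
      rw [map_sub, h, hz0]; ring
    · rintro ⟨x, hx, rfl⟩
      rw [map_add, hx, hz0]; ring
  have hcc : Set.ncard {z | φ z = z + 1} = q := by
    rw [hC, Set.ncard_image_of_injective _ (add_left_injective z0), hK]
  rw [← hun, Set.ncard_union_eq hdisj (Set.toFinite _) (Set.toFinite _),
    Set.ncard_image_of_injective _ (add_left_injective (x0 : F))] at hcc
  omega

theorem mem_iff_s17 {F : Type*} [Field F] [Fintype F] [CharP F 2] (φ : F →+* F)
    (hφ : ∀ x, φ (φ x) = x) (a b : F) (ha : a ≠ 0) (hb : b ≠ 0) :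
    {r : F | r ≠ 0 ∧ ∃ s : F, φ s * s ≠ 1 ∧
        b * r * s ^ 2 + (φ a * r - a * φ r) * s - φ (b * r) = 0} =
    (fun p : F × F => p.1 * p.2 / φ a) ''
      (({x | φ x = x} \ {0}) ×ˢ ZZ φ (φ b * b / (φ a * a))) := by
  have two : (2 : F) = 0 := CharTwo.two_eq_zero
  have ha' : φ a ≠ 0 := by simpa using ha
  have hb' : φ b ≠ 0 := by simpa using hb
  have sq1 : ∀ x : F, x ^ 2 = 1 → x = 1 := by
    intro x hx
    have : (x + 1) ^ 2 = 0 := by linear_combination hx + (x + 1) * two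
    exact CharTwo.add_eq_zero.1 (pow_eq_zero_iff (two_ne_zero) |>.1 this)
  ext r
  constructor
  · rintro ⟨hr, s, hs, e⟩
    have hr' : φ r ≠ 0 := by simpa using hr
    obtain ⟨c, hc⟩ : ∃ c, c = φ a * r + a * φ r := ⟨_, rfl⟩
    have hφc : φ c = c := by rw [hc]; simp only [map_add, map_mul, hφ]; ring
    have e' : b * r * s ^ 2 + c * s = φ b * φ r := by
      rw [map_mul] at e
      rw [hc]; linear_combination e + (a * φ r * s) * two
    have hc0 : c ≠ 0 := by
      intro h0
      rw [h0, zero_mul, add_zero] at e'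
      have e2 := congrArg φ e'
      simp only [map_mul, map_pow, hφ] at e2
      apply hs
      apply sq1
      have hne : b * r * (φ b * φ r) ≠ 0 := by simp [*]
      apply mul_left_cancel₀ hne
      linear_combination (φ b * φ r * φ s ^ 2) * e' + φ b * φ r * e2
    have hphr : φ a * r + a * φ r = c := hc.symm
    refine ⟨(c, φ a * r / c), ⟨⟨hφc, hc0⟩, ?_, b * r * s / c, ?_, ?_⟩, ?_⟩
    · simp only [map_div₀, map_mul, hφ, hφc]
      field_simp
      linear_combination hphr - φ a * r * two
    · obtain ⟨t, ht⟩ : ∃ t, t = b * r * s / c := ⟨_, rfl⟩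
      have htt : t ^ 2 + t = b * r * (φ b * φ r) / c ^ 2 := by
        rw [ht, ← e']; field_simp
      have hphit : φ t = φ b * φ r * φ s / c := by rw [ht]; simp [hφc]
      have htt2 : φ t ^ 2 + φ t = t ^ 2 + t := by
        have := congrArg φ htt
        simp only [map_add, map_pow, map_div₀, map_mul, hφ, hφc] at this
        rw [this, htt]; ring
      rw [← ht]
      have hm : (φ t + t) * (φ t + t + 1) = 0 := by
        linear_combination htt2 + (t ^ 2 + t + φ t * t) * two
      rcases mul_eq_zero.1 hm with h | h
      · exact CharTwo.add_eq_zero.1 h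
      · exfalso
        apply hs
        have h2 : φ t * t = t ^ 2 + t := by linear_combination t * h - (t ^ 2 + t) * two
        rw [htt, hphit, ht] at h2
        field_simp at h2
        linear_combination h2
    · simp only
      field_simp
      linear_combination a * e' + φ b * hphr - r * φ a * φ b * two
    · simp only; field_simp
  · rintro ⟨⟨c, z⟩, ⟨⟨hφc, hc0⟩, hz, t, ht, e⟩, rfl⟩
    simp only [Set.mem_ofPred_eq, Set.mem_singleton_iff] at hφc hc0 hz ht e ⊢
    have hz0 : z ≠ 0 := by
      rintro rfl
      simp at hz
    have hz1 : z + 1 ≠ 0 := by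
      rw [← hz]; simpa using hz0
    have hr : c * z / φ a ≠ 0 := by simp [*]
    refine ⟨hr, t * φ a / (b * z), ?_, ?_⟩
    · simp only [map_div₀, map_mul, hφ, ht, hz]
      intro h
      field_simp at h e
      have e3 : t * (φ a * a) = 0 := by
        linear_combination e - h
      have : t = 0 := by simpa [ha, ha'] using e3
      rw [this] at h
      have : φ b * (z + 1) * (b * z) = 0 := by linear_combination -h
      simp [*] at this
    · simp only [map_div₀, map_mul, hφ, hφc, hz]
      field_simp at e ⊢
      linear_combination c * e - c * t * φ a * a * two

theorem card_R2_even (q : ℕ) (hq : IsPrimePow q) (heven : Even q)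
    (F : Type*) [Field F] [Fintype F] (hF : Fintype.card F = q ^ 2)
    (a b : F) (ha : a ≠ 0) (hb : b ≠ 0) (hab : a ^ (q + 1) ≠ b ^ (q + 1)) :
    Set.ncard {r : F | r ≠ 0 ∧ ∃ s : F, s ^ (q + 1) ≠ 1 ∧
        b * r * s ^ 2 + (a ^ q * r - a * r ^ q) * s - (b * r) ^ q = 0} =
      q * (q - 1) / 2 := by
  obtain ⟨n, hn, hqn⟩ : ∃ n, 0 < n ∧ q = 2 ^ n := by
    obtain ⟨p, n, hp, hn, rfl⟩ := hq
    have hp' : p.Prime := hp.nat_prime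
    have : 2 ∣ p := Nat.prime_two.dvd_of_dvd_pow heven.two_dvd
    rw [← (Nat.prime_dvd_prime_iff_eq Nat.prime_two hp').1 this]
    exact ⟨n, hn, rfl⟩
  haveI : CharP F 2 := by
    apply CharTwo.of_one_ne_zero_of_two_eq_zero one_ne_zero
    have h := FiniteField.cast_card_eq_zero F
    rw [hF, hqn] at h
    push_cast at h
    exact eq_zero_of_pow_eq_zero (eq_zero_of_pow_eq_zero h)
  let φ : F →+* F := iterateFrobenius F 2 n
  have hφq : ∀ x, φ x = x ^ q := fun x => by rw [hqn]; exact iterateFrobenius_def ..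
  have hφ : ∀ x, φ (φ x) = x := fun x => by
    rw [hφq, hφq, ← pow_mul, ← sq, ← hF, FiniteField.pow_card]
  have hq1 : 1 < q := hqn ▸ Nat.one_lt_two_pow hn.ne'
  classical
  have hKle : Nat.card {x : F | φ x = x} ≤ q := by
    open Polynomial in
    have hsub : {x : F | φ x = x} ⊆ ((X ^ q - X : F[X]).roots.toFinset : Set F) := by
      intro x hx
      simp only [Set.mem_ofPred_eq, hφq] at hx
      simp [FiniteField.X_pow_card_sub_X_ne_zero F hq1, hx]
    rw [Nat.card_coe_set_eq]
    refine (Set.ncard_le_ncard hsub (Set.toFinite _)).trans ?_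
    rw [Set.ncard_coe_finset]
    refine (Multiset.toFinset_card_le _).trans ((Polynomial.card_roots' _).trans ?_)
    rw [FiniteField.X_pow_card_sub_X_natDegree_eq F hq1]
  obtain ⟨hK, hz⟩ := core φ hφ q hF hKle
  have ha' : φ a ≠ 0 := by simpa using ha
  have hb' : φ b ≠ 0 := by simpa using hb
  have hZ := card_ZZ φ q hK hz (φ b * b / (φ a * a))
    (by simp only [map_div₀, map_mul, hφ]; ring) (by simp [*])
    (by
      intro h
      rw [div_eq_one_iff_eq (by simp [*]), hφq, hφq, ← pow_succ, ← pow_succ] at h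
      exact hab h.symm)
  have hm := mem_iff_s17 φ hφ a b ha hb
  have hset : {r : F | r ≠ 0 ∧ ∃ s : F, s ^ (q + 1) ≠ 1 ∧
        b * r * s ^ 2 + (a ^ q * r - a * r ^ q) * s - (b * r) ^ q = 0} =
      {r : F | r ≠ 0 ∧ ∃ s : F, φ s * s ≠ 1 ∧
        b * r * s ^ 2 + (φ a * r - a * φ r) * s - φ (b * r) = 0} := by
    simp only [hφq, pow_succ]
  rw [hset, hm, Set.ncard_image_of_injOn, Set.ncard_prod, Set.ncard_diff_singleton_of_mem, hK]
  · rw [mul_comm q, ← hZ]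
    rw [Nat.mul_left_comm, Nat.mul_div_cancel_left _ two_pos]
  · simp
  · rintro ⟨c, z⟩ ⟨⟨hc, hc0⟩, hz, -⟩ ⟨c', z'⟩ ⟨⟨hc', hc0'⟩, hz', -⟩ h
    simp only [Set.mem_ofPred_eq, Set.mem_singleton_iff] at *
    have h1 : c * z = c' * z' := by field_simp at h; exact h
    have h2 := congrArg φ h1
    simp only [map_mul, hc, hc', hz, hz'] at h2
    have h3 : c = c' := by linear_combination h2 - h1
    subst h3
    rw [mul_left_cancel₀ hc0 h1]
end
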